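/- Consider the very noisy channel family W_ζ(y|x) = Γ(y)(1 + ζλ(x,y)), and assume 𝐂 := max_{P∈P(𝒳)} (1/2) Σ_y Γ(y)·(Σ_x P(x)λ²(x,y) − (Σ_x P(x)λ(x,y))²) > 0 (which ensures C_ζ > 0 for all sufficiently small ζ > 0). Then for every ε ∈ (0, 1/2], limsup_{ζ→0} limsup_{n→∞} (log M*_{fb,ζ}(n, ε) − n·C_ζ)/√(n·V_{min,ζ}) ≤ Φ^{-1}(ε), and for every ε ∈ (1/2, 1), limsup_{ζ→0} limsup_{n→∞} (log M*_{fb,ζ}(n, ε) − n·C_ζ)/√(n·V_{max,ζ}) ≤ Φ^{-1}(ε). -/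

import Mathlib

open MeasureTheory Real Filter Set
open scoped BigOperators ENNReal Classical

noncomputable section

namespace Paper

variable {X Y : Type*} [Fintype X] [Fintype Y]

/-- `P` is a probability mass function on the finite alphabet `X`. -/
def IsDist (P : X → ℝ) : Prop := (∀ x, 0 ≤ P x) ∧ ∑ x, P x = 1

/-- `W` is a discrete memoryless channel (a stochastic matrix). -/
def IsChannel (W : X → Y → ℝ) : Prop := ∀ x, IsDist (W x)

/-- `W` has no all-zero column. -/
def NoZeroColumn (W : X → Y → ℝ) : Prop := ∀ y, ∃ x, 0 < W x y

/-- Output distribution induced by input distribution `P` through `W`. -/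
def outDist (P : X → ℝ) (W : X → Y → ℝ) (y : Y) : ℝ := ∑ x, P x * W x y

/-- Mutual information `I(P; W)` (in nats). -/
def mutInfo (P : X → ℝ) (W : X → Y → ℝ) : ℝ :=
  ∑ x, ∑ y, P x * W x y * Real.log (W x y / outDist P W y)

/-- Shannon capacity `C`. -/
def capacity (W : X → Y → ℝ) : ℝ :=
  sSup {c | ∃ P, IsDist P ∧ mutInfo P W = c}

/-- The set of capacity-achieving input distributions `Π*`. -/
def capacityAchievers (W : X → Y → ℝ) : Set (X → ℝ) :=
  {P | IsDist P ∧ mutInfo P W = capacity W}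

/-- The (unique) capacity-achieving output distribution `q*`. -/
def qStar (W : X → Y → ℝ) : Y → ℝ :=
  if h : (capacityAchievers W).Nonempty then outDist h.choose W else fun _ => 0

/-- The information density `i*(x,y) = log (W(y|x)/q*(y))`. -/
def iStar (W : X → Y → ℝ) (x : X) (y : Y) : ℝ := Real.log (W x y / qStar W y)

/-- `ν_x = Var[i*(x,Y)]`, `Y ~ W(·|x)`. -/
def nu (W : X → Y → ℝ) (x : X) : ℝ :=
  ∑ y, W x y * (iStar W x y) ^ 2 - (∑ y, W x y * iStar W x y) ^ 2

/-- `V_min`. -/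
def Vmin (W : X → Y → ℝ) : ℝ :=
  sInf {v | ∃ P ∈ capacityAchievers W, v = ∑ x, P x * nu W x}

/-- `V_max`. -/
def Vmax (W : X → Y → ℝ) : ℝ :=
  sSup {v | ∃ P ∈ capacityAchievers W, v = ∑ x, P x * nu W x}

/-- `V_ε`. -/
def Veps (W : X → Y → ℝ) (ε : ℝ) : ℝ := if ε < 1/2 then Vmin W else Vmax W

/-- `ν_min = min_x ν_x`. -/
def numin (W : X → Y → ℝ) [Nonempty X] : ℝ := ⨅ x, nu W x

/-- `ν_max = max_x ν_x`. -/
def numax (W : X → Y → ℝ) [Nonempty X] : ℝ := ⨆ x, nu W x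

/-- Average error probability of the feedback code `(enc, dec)` with `M` messages
and blocklength `n`. -/
def errProb (W : X → Y → ℝ) (n M : ℕ) (enc : Fin M → List Y → X)
    (dec : (Fin n → Y) → Fin M) : ℝ :=
  (M : ℝ)⁻¹ * ∑ m : Fin M, ∑ y : Fin n → Y,
    (∏ k : Fin n, W (enc m ((List.ofFn y).take (k : ℕ))) (y k)) *
      (if dec y = m then 0 else 1)

/-- Minimum average error probability of `(n,R)` feedback codes. -/
def minErr (W : X → Y → ℝ) (n : ℕ) (R : ℝ) : ℝ :=
  sInf {e | ∃ enc dec, e = errProb W n ⌈Real.exp (n * R)⌉₊ enc dec}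

/-- `M*_fb(n, ε)`. -/
def Mfb (W : X → Y → ℝ) (n : ℕ) (ε : ℝ) : ℝ :=
  sSup {m | ∃ R : ℝ, m = (⌈Real.exp (n * R)⌉₊ : ℝ) ∧ minErr W n R ≤ ε}

/-- Standard Gaussian density `φ`. -/
def gpdf (u : ℝ) : ℝ := (Real.sqrt (2 * Real.pi))⁻¹ * Real.exp (-u ^ 2 / 2)

/-- Standard Gaussian CDF `Φ`. -/
def gcdf (t : ℝ) : ℝ := ∫ u in Set.Iic t, gpdf u

/-- Inverse Gaussian CDF `Φ⁻¹`. -/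
def gcdfInv : ℝ → ℝ := Function.invFun gcdf

/-- The sequence `(log M*_fb(n,ε) - nC)/√n` whose liminf/limsup is the
second-order coding rate with feedback. -/
def SOfb (W : X → Y → ℝ) (ε : ℝ) (n : ℕ) : ℝ :=
  (Real.log (Mfb W n ε) - n * capacity W) / Real.sqrt n

/-- The very noisy channel `W_ζ(y|x) = Γ(y)(1 + ζ λ(x,y))`. -/
def VNC (Γ : Y → ℝ) (lam : X → Y → ℝ) (ζ : ℝ) : X → Y → ℝ :=
  fun x y => Γ y * (1 + ζ * lam x y)

/-- The constant `𝐂` governing the very noisy capacity. -/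
def bigC (Γ : Y → ℝ) (lam : X → Y → ℝ) : ℝ :=
  sSup {c | ∃ P : X → ℝ, IsDist P ∧ c = 1 / 2 * ∑ y, Γ y *
    ((∑ x, P x * lam x y ^ 2) - (∑ x, P x * lam x y) ^ 2)}

lemma gpdf_eq : gpdf = ProbabilityTheory.gaussianPDFReal 0 1 := by
  funext u
  simp [gpdf, ProbabilityTheory.gaussianPDFReal]

lemma continuous_gpdf : Continuous gpdf := by
  unfold gpdf; fun_prop

lemma integrable_gpdf : Integrable gpdf := by
  rw [gpdf_eq]; exact ProbabilityTheory.integrable_gaussianPDFReal 0 1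

lemma gpdf_pos (u : ℝ) : 0 < gpdf u := by
  unfold gpdf; positivity

lemma gpdf_neg (u : ℝ) : gpdf (-u) = gpdf u := by
  simp [gpdf]

lemma hasDerivAt_gcdf (t : ℝ) : HasDerivAt gcdf (gpdf t) t := by
  have h : gcdf = fun t => gcdf 0 + ∫ u in (0 : ℝ)..t, gpdf u := by
    funext t
    have := intervalIntegral.integral_Iic_sub_Iic (f := gpdf) (a := 0) (b := t) (μ := volume)
      integrable_gpdf.integrableOn integrable_gpdf.integrableOn
    rw [← this]; simp only [gcdf]; ring
  rw [h]
  exact (intervalIntegral.integral_hasDerivAt_right (integrable_gpdf.intervalIntegrable)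
    (continuous_gpdf.stronglyMeasurableAtFilter _ _) continuous_gpdf.continuousAt).const_add _

lemma continuous_gcdf : Continuous gcdf :=
  continuous_iff_continuousAt.2 fun t => (hasDerivAt_gcdf t).continuousAt

lemma strictMono_gcdf : StrictMono gcdf :=
  strictMono_of_hasDerivAt_pos hasDerivAt_gcdf gpdf_pos

lemma tendsto_gcdf_atTop : Tendsto gcdf atTop (nhds 1) := by
  have h2 : ∫ u, gpdf u = 1 := by
    rw [gpdf_eq]; exact ProbabilityTheory.integral_gaussianPDFReal_eq_one 0 one_ne_zero
  rw [← h2]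
  have := (MeasureTheory.aecover_Iic (μ := (volume : Measure ℝ)) (l := atTop)
    (b := fun t : ℝ => t) tendsto_id).integral_tendsto_of_countably_generated integrable_gpdf
  exact this

lemma tendsto_gcdf_atBot : Tendsto gcdf atBot (nhds 0) := by
  have h := fun t : ℝ => intervalIntegral.integral_Iic_add_Ioi (f := gpdf) (b := t) (μ := volume)
      integrable_gpdf.integrableOn integrable_gpdf.integrableOn
  have h2 : ∫ u, gpdf u = 1 := by
    rw [gpdf_eq]; exact ProbabilityTheory.integral_gaussianPDFReal_eq_one 0 one_ne_zero
  have h3 := (MeasureTheory.aecover_Ioi (μ := (volume : Measure ℝ)) (l := atBot)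
    (a := fun t : ℝ => t) tendsto_id).integral_tendsto_of_countably_generated integrable_gpdf
  have h4 : gcdf = fun t => 1 - ∫ u in Set.Ioi t, gpdf u := by
    funext t; rw [← h2, ← h t, gcdf]; ring
  rw [h4]
  have := h3.const_sub 1
  rw [h2, sub_self] at this
  exact this

lemma gcdf_gcdfInv {ε : ℝ} (h0 : 0 < ε) (h1 : ε < 1) : gcdf (gcdfInv ε) = ε := by
  apply Function.invFun_eq
  obtain ⟨a, ha⟩ := (tendsto_gcdf_atBot.eventually_lt_const h0).exists
  obtain ⟨b, hb⟩ := (tendsto_gcdf_atTop.eventually_const_lt h1).exists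
  exact mem_range_of_exists_le_of_exists_ge continuous_gcdf ⟨a, ha.le⟩ ⟨b, hb.le⟩

lemma poly_mul_gpdf_le (z : ℝ) : (1 + |z| + z ^ 2 + |z| ^ 3) * gpdf z ≤ 8 := by
  have h1 := Real.quadratic_le_exp_of_nonneg (x := z ^ 2 / 2) (by positivity)
  have h2 : gpdf z ≤ (Real.exp (z ^ 2 / 2))⁻¹ := by
    unfold gpdf
    rw [← Real.exp_neg, show -z ^ 2 / 2 = -(z ^ 2 / 2) by ring]
    refine mul_le_of_le_one_left (Real.exp_pos _).le (inv_le_one_of_one_le₀ ?_)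
    rw [Real.one_le_sqrt]
    have := Real.pi_gt_three
    linarith
  have h3 : 1 + |z| + z ^ 2 + |z| ^ 3 ≤ 8 * Real.exp (z ^ 2 / 2) := by
    rw [← sq_abs z] at *
    have h0 := abs_nonneg z
    nlinarith [sq_nonneg (|z| - 1), sq_nonneg (|z| ^ 2 - |z|), sq_nonneg (|z| ^ 2)]
  calc _ ≤ (8 * Real.exp (z ^ 2 / 2)) * (Real.exp (z ^ 2 / 2))⁻¹ := by
        gcongr
        exact (gpdf_pos z).le
    _ = 8 := by field_simp

/-- The solution `-Φ(-s/√v)` of the heat equation with time parameter `v`. -/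
def heat (v s : ℝ) : ℝ := -gcdf (-(s / Real.sqrt v))

/-- The first space derivative of `heat`. -/
def heatS (v s : ℝ) : ℝ := gpdf (s / Real.sqrt v) / Real.sqrt v

/-- The second space derivative of `heat`. -/
def heatSS (v s : ℝ) : ℝ := -(s / v) * heatS v s

/-- The third space derivative of `heat`. -/
def heatSSS (v s : ℝ) : ℝ := ((s / v) ^ 2 - 1 / v) * heatS v s

/-- The time derivative of `heatSS`. -/
def heatSSV (v s : ℝ) : ℝ := (3 / 2 * (s / v ^ 2) - 1 / 2 * (s ^ 3 / v ^ 3)) * heatS v s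

lemma hasDerivAt_gpdf (z : ℝ) : HasDerivAt gpdf (-z * gpdf z) z := by
  unfold gpdf
  have h : HasDerivAt (fun u : ℝ => -u ^ 2 / 2) (-z) z := by
    have := ((hasDerivAt_pow 2 z).neg).div_const 2
    refine this.congr_deriv ?_
    norm_num
    ring
  exact ((h.exp).const_mul (Real.sqrt (2 * Real.pi))⁻¹).congr_deriv (by ring)

lemma hasDerivAt_heat (v s : ℝ) : HasDerivAt (heat v) (heatS v s) s := by
  have h : HasDerivAt (fun s : ℝ => -(s / Real.sqrt v)) (-(1 / Real.sqrt v)) s :=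
    ((hasDerivAt_id s).div_const _).neg
  have := ((hasDerivAt_gcdf _).comp s h).neg
  refine this.congr_deriv ?_
  rw [gpdf_neg, heatS]; ring

lemma hasDerivAt_heatS {v : ℝ} (hv : 0 < v) (s : ℝ) : HasDerivAt (heatS v) (heatSS v s) s := by
  have h : HasDerivAt (fun s : ℝ => s / Real.sqrt v) (1 / Real.sqrt v) s :=
    (hasDerivAt_id s).div_const _
  have := ((hasDerivAt_gpdf _).comp s h).div_const (Real.sqrt v)
  refine this.congr_deriv ?_
  have h0 := Real.sqrt_pos.2 hv
  have h1 := Real.sq_sqrt hv.le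
  rw [heatSS, heatS]
  rw [show s / v = s / (Real.sqrt v) ^ 2 by rw [h1]]
  field_simp

lemma hasDerivAt_heatSS {v : ℝ} (hv : 0 < v) (s : ℝ) : HasDerivAt (heatSS v) (heatSSS v s) s := by
  have h : HasDerivAt (fun s : ℝ => -(s / v)) (-(1 / v)) s :=
    ((hasDerivAt_id s).div_const _).neg
  have := h.mul (hasDerivAt_heatS hv s)
  refine this.congr_deriv ?_
  rw [heatSSS, heatSS]
  ring

lemma hasDerivAt_div_sqrt {v : ℝ} (hv : 0 < v) (s : ℝ) :
    HasDerivAt (fun v => s / Real.sqrt v) (-(s / (2 * v * Real.sqrt v))) v := by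
  have h0 := Real.sqrt_pos.2 hv
  have h1 := Real.sq_sqrt hv.le
  refine ((hasDerivAt_const v s).div (Real.hasDerivAt_sqrt hv.ne') h0.ne').congr_deriv ?_
  rw [h1]; field_simp; ring

lemma hasDerivAt_heat_time {v : ℝ} (hv : 0 < v) (s : ℝ) :
    HasDerivAt (fun v => heat v s) (heatSS v s / 2) v := by
  have := ((hasDerivAt_gcdf _).comp v (hasDerivAt_div_sqrt hv s).neg).neg
  refine this.congr_deriv ?_
  have h0 := Real.sqrt_pos.2 hv
  simp only [Pi.neg_apply]
  rw [gpdf_neg, heatSS, heatS]; field_simp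

lemma hasDerivAt_heatSS_time {v : ℝ} (hv : 0 < v) (s : ℝ) :
    HasDerivAt (fun v => heatSS v s) (heatSSV v s) v := by
  have h0 := Real.sqrt_pos.2 hv
  have h1 := Real.sq_sqrt hv.le
  have hS := ((hasDerivAt_gpdf _).comp v (hasDerivAt_div_sqrt hv s)).div
    (Real.hasDerivAt_sqrt hv.ne') h0.ne'
  have h : HasDerivAt (fun v : ℝ => -(s / v)) (s / v ^ 2) v := by
    refine ((hasDerivAt_const v s).div (hasDerivAt_id v) hv.ne').neg.congr_deriv ?_
    simp; ring
  refine (h.mul hS).congr_deriv ?_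
  rw [heatSSV, heatS]
  simp only [Function.comp, Pi.div_apply]
  generalize gpdf (s / Real.sqrt v) = g
  rw [h1]
  generalize hr : Real.sqrt v = r at *
  subst h1
  field_simp
  ring

lemma heatS_nonneg (v s : ℝ) : 0 ≤ heatS v s := by
  unfold heatS
  have := (gpdf_pos (s / Real.sqrt v)).le
  positivity

lemma heat_bounds {τ : ℝ} (hτ : 0 < τ) : ∃ K : ℝ, 0 < K ∧ ∀ v, τ ≤ v → ∀ s,
    |heatSS v s| ≤ K ∧ |heatSSS v s| ≤ K ∧ |heatSSV v s| ≤ K ∧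
    (s / v) ^ 2 * heatS v s ≤ K := by
  set m := Real.sqrt τ with hm
  have hm0 : 0 < m := Real.sqrt_pos.2 hτ
  refine ⟨32 * (1 / m ^ 2 + 1 / m ^ 3 + 1 / m ^ 4), by positivity, fun v hv s => ?_⟩
  have hv0 : 0 < v := hτ.trans_le hv
  have h0 := Real.sqrt_pos.2 hv0
  have h1 := Real.sq_sqrt hv0.le
  have hmr : m ≤ Real.sqrt v := Real.sqrt_le_sqrt hv
  have hp := poly_mul_gpdf_le (s / Real.sqrt v)
  unfold heatSS heatSSS heatSSV heatS
  have hg := gpdf_pos (s / Real.sqrt v)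
  generalize hr : Real.sqrt v = r at *
  subst h1
  have hs : s = (s / r) * r := by field_simp
  generalize s / r = z at *
  subst hs
  generalize gpdf z = g at *
  have hz := abs_nonneg z
  have hz2 : |z| * g ≤ 8 := by
    nlinarith [mul_nonneg hz hg.le, mul_nonneg (sq_nonneg z) hg.le, mul_nonneg (pow_nonneg hz 3) hg.le]
  have hz3 : z ^ 2 * g ≤ 8 := by
    nlinarith [mul_nonneg hz hg.le, mul_nonneg (sq_nonneg z) hg.le, mul_nonneg (pow_nonneg hz 3) hg.le]
  have hz4 : |z| ^ 3 * g ≤ 8 := by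
    nlinarith [mul_nonneg hz hg.le, mul_nonneg (sq_nonneg z) hg.le, mul_nonneg (pow_nonneg hz 3) hg.le]
  have hz5 : g ≤ 8 := by
    nlinarith [mul_nonneg hz hg.le, mul_nonneg (sq_nonneg z) hg.le, mul_nonneg (pow_nonneg hz 3) hg.le]
  have e2 : 1 / r ^ 2 ≤ 1 / m ^ 2 := by gcongr
  have e3 : 1 / r ^ 3 ≤ 1 / m ^ 3 := by gcongr
  have e4 : 1 / r ^ 4 ≤ 1 / m ^ 4 := by gcongr
  have p2 : 0 < 1 / m ^ 2 := by positivity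
  have p3 : 0 < 1 / m ^ 3 := by positivity
  have p4 : 0 < 1 / m ^ 4 := by positivity
  have key : ∀ (c A : ℝ) (k : ℝ), 0 ≤ k → |c| * g ≤ 32 → k ≤ A → |c * g * k| ≤ 32 * A := by
    intro c A k hk hc hA
    rw [abs_mul, abs_mul, abs_of_pos hg, abs_of_nonneg hk]
    exact mul_le_mul hc hA hk (by norm_num)
  refine ⟨?_, ?_, ?_, ?_⟩
  · have := key (-z) (1 / m ^ 2) (1 / r ^ 2) (by positivity) (by rw [abs_neg]; linarith) e2
    have e : -(z * r / r ^ 2) * (g / r) = -z * g * (1 / r ^ 2) := by field_simp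
    rw [e]; linarith
  · have hc : |z ^ 2 - 1| * g ≤ 32 := by
      have : |z ^ 2 - 1| ≤ z ^ 2 + 1 := by
        rw [abs_le]; constructor <;> nlinarith [sq_nonneg z]
      nlinarith
    have := key (z ^ 2 - 1) (1 / m ^ 3) (1 / r ^ 3) (by positivity) hc e3
    have e : ((z * r / r ^ 2) ^ 2 - 1 / r ^ 2) * (g / r) = (z ^ 2 - 1) * g * (1 / r ^ 3) := by
      field_simp
    rw [e]; linarith
  · have hc : |3 / 2 * z - 1 / 2 * z ^ 3| * g ≤ 32 := by
      have : |3 / 2 * z - 1 / 2 * z ^ 3| ≤ 3 / 2 * |z| + 1 / 2 * |z| ^ 3 := by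
        refine (abs_sub _ _).trans ?_
        rw [abs_mul, abs_mul, abs_pow]; norm_num
      nlinarith
    have := key (3 / 2 * z - 1 / 2 * z ^ 3) (1 / m ^ 4) (1 / r ^ 4) (by positivity) hc e4
    have e : (3 / 2 * (z * r / (r ^ 2) ^ 2) - 1 / 2 * ((z * r) ^ 3 / (r ^ 2) ^ 3)) * (g / r)
        = (3 / 2 * z - 1 / 2 * z ^ 3) * g * (1 / r ^ 4) := by
      field_simp
    rw [e]; linarith
  · have := key (z ^ 2) (1 / m ^ 3) (1 / r ^ 3) (by positivity)
      (by rw [abs_of_nonneg (sq_nonneg z)]; linarith) e3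
    have e : (z * r / r ^ 2) ^ 2 * (g / r) = z ^ 2 * g * (1 / r ^ 3) := by
      field_simp
    rw [e]
    have := le_abs_self (z ^ 2 * g * (1 / r ^ 3))
    linarith

lemma abs_sub_le_of_hasDerivAt {f f' : ℝ → ℝ} {B a b : ℝ}
    (hf : ∀ u ∈ uIcc a b, HasDerivAt f (f' u) u) (hB : ∀ u ∈ uIcc a b, |f' u| ≤ B) :
    |f b - f a| ≤ B * |b - a| := by
  have := Convex.norm_image_sub_le_of_norm_hasDerivWithin_le (f := f) (f' := f') (C := B)
    (s := uIcc a b) (x := a) (y := b) (fun u hu => (hf u hu).hasDerivWithinAt) hB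
    (convex_uIcc a b) left_mem_uIcc right_mem_uIcc
  simpa using this

lemma abs_taylor_one_le {f f' f'' : ℝ → ℝ} {B a b : ℝ}
    (hf : ∀ u ∈ uIcc a b, HasDerivAt f (f' u) u) (hf' : ∀ u ∈ uIcc a b, HasDerivAt f' (f'' u) u)
    (hB : ∀ u ∈ uIcc a b, |f'' u| ≤ B) :
    |f b - f a - f' a * (b - a)| ≤ B * |b - a| ^ 2 := by
  have hB0 : 0 ≤ B := (abs_nonneg _).trans (hB a left_mem_uIcc)
  have := abs_sub_le_of_hasDerivAt (f := fun u => f u - f' a * (u - a))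
    (f' := fun u => f' u - f' a) (B := B * |b - a|) (a := a) (b := b)
    (fun u hu => by
      refine ((hf u hu).sub (((hasDerivAt_id u).sub_const a).const_mul (f' a))).congr_deriv ?_
      ring)
    (fun u hu => by
      have h1 : uIcc a u ⊆ uIcc a b := uIcc_subset_uIcc_left hu
      refine (abs_sub_le_of_hasDerivAt (fun w hw => hf' w (h1 hw))
        (fun w hw => hB w (h1 hw))).trans ?_
      exact mul_le_mul_of_nonneg_left (abs_sub_left_of_mem_uIcc hu) hB0)
  have e : f b - f' a * (b - a) - (f a - f' a * (a - a)) = f b - f a - f' a * (b - a) := by ring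
  simp only [e] at this
  nlinarith

lemma abs_taylor_two_le {f f' f'' f''' : ℝ → ℝ} {B a b : ℝ}
    (hf : ∀ u ∈ uIcc a b, HasDerivAt f (f' u) u) (hf' : ∀ u ∈ uIcc a b, HasDerivAt f' (f'' u) u)
    (hf'' : ∀ u ∈ uIcc a b, HasDerivAt f'' (f''' u) u)
    (hB : ∀ u ∈ uIcc a b, |f''' u| ≤ B) :
    |f b - f a - f' a * (b - a) - f'' a / 2 * (b - a) ^ 2| ≤ B * |b - a| ^ 3 := by
  have hB0 : 0 ≤ B := (abs_nonneg _).trans (hB a left_mem_uIcc)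
  have := abs_sub_le_of_hasDerivAt
    (f := fun u => f u - f' a * (u - a) - f'' a / 2 * (u - a) ^ 2)
    (f' := fun u => f' u - f' a - f'' a * (u - a)) (B := B * |b - a| ^ 2) (a := a) (b := b)
    (fun u hu => by
      have h1 := (hasDerivAt_id u).sub_const a
      refine (((hf u hu).sub (h1.const_mul (f' a))).sub
        ((h1.pow 2).const_mul (f'' a / 2))).congr_deriv ?_
      simp; ring)
    (fun u hu => by
      have h1 : uIcc a u ⊆ uIcc a b := uIcc_subset_uIcc_left hu
      refine (abs_taylor_one_le (fun w hw => hf' w (h1 hw)) (fun w hw => hf'' w (h1 hw))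
        (fun w hw => hB w (h1 hw))).trans ?_
      exact mul_le_mul_of_nonneg_left
        (pow_le_pow_left₀ (abs_nonneg _) (abs_sub_left_of_mem_uIcc hu) 2) hB0)
  have e : f b - f' a * (b - a) - f'' a / 2 * (b - a) ^ 2
      - (f a - f' a * (a - a) - f'' a / 2 * (a - a) ^ 2)
      = f b - f a - f' a * (b - a) - f'' a / 2 * (b - a) ^ 2 := by ring
  simp only [e] at this
  nlinarith

lemma heat_expansion {τ : ℝ} (hτ : 0 < τ) : ∃ K : ℝ, 0 < K ∧ ∀ v, τ ≤ v → ∀ s,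
    (∀ ξ, heat v (s + ξ) ≤ heat v s + heatS v s * ξ + heatSS v s / 2 * ξ ^ 2 + K * |ξ| ^ 3) ∧
    (∀ h, 0 ≤ h → heat v s + heatSS v s / 2 * h - K * h ^ 2 ≤ heat (v + h) s) ∧
    |heatSS v s| ≤ K ∧ ∀ L, 0 < L → |heatSS v s| ≤ L * heatS v s + K / L := by
  obtain ⟨K, hK, hb⟩ := heat_bounds hτ
  refine ⟨K, hK, fun v hv s => ⟨fun ξ => ?_, fun h hh => ?_, (hb v hv s).1, fun L hL => ?_⟩⟩
  · have hv0 := hτ.trans_le hv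
    have := abs_taylor_two_le (f := heat v) (a := s) (b := s + ξ)
      (fun u _ => hasDerivAt_heat v u) (fun u _ => hasDerivAt_heatS hv0 u)
      (fun u _ => hasDerivAt_heatSS hv0 u) (fun u _ => (hb v hv u).2.1)
    rw [add_sub_cancel_left] at this
    have := (abs_le.1 this).2
    linarith
  · have hmem : ∀ u ∈ uIcc v (v + h), τ ≤ u := fun u hu => by
      rw [uIcc_of_le (by linarith)] at hu
      exact hv.trans hu.1
    have := abs_taylor_one_le (f := fun v => heat v s) (a := v) (b := v + h) (B := K / 2)
      (fun u hu => hasDerivAt_heat_time (hτ.trans_le (hmem u hu)) s)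
      (fun u hu => (hasDerivAt_heatSS_time (hτ.trans_le (hmem u hu)) s).div_const 2)
      (fun u hu => by
        rw [abs_div, abs_two]
        have := (hb u (hmem u hu) s).2.2.1
        linarith)
    rw [add_sub_cancel_left, abs_of_nonneg hh] at this
    have := (abs_le.1 this).1
    nlinarith [sq_nonneg h]
  · have hS := heatS_nonneg v s
    have h2 := (hb v hv s).2.2.2
    unfold heatSS
    rw [abs_mul, abs_neg, abs_of_nonneg hS]
    rw [← sq_abs] at h2
    generalize |s / v| = q at *
    have h3 : q ≤ L + q ^ 2 / L := by
      rw [← sub_nonneg]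
      have : L + q ^ 2 / L - q = ((L - q / 2) ^ 2 + 3 / 4 * q ^ 2) / L := by field_simp; ring
      rw [this]; positivity
    calc q * heatS v s ≤ (L + q ^ 2 / L) * heatS v s := by gcongr
      _ = L * heatS v s + q ^ 2 * heatS v s / L := by ring
      _ ≤ _ := by gcongr

/-- Expectation of `g` under the law on output sequences that the feedback strategy `f` induces
through the channel `W`. -/
def feedbackExp (W : X → Y → ℝ) (f : List Y → X) (n : ℕ) (g : (Fin n → Y) → ℝ) : ℝ :=
  ∑ y : Fin n → Y, (∏ k : Fin n, W (f ((List.ofFn y).take (k : ℕ))) (y k)) * g y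

/-- Accumulated value of `ξ` along the outputs `y` under the feedback strategy `f`. -/
def pathSum (ξ : X → Y → ℝ) (f : List Y → X) {n : ℕ} (y : Fin n → Y) : ℝ :=
  ∑ k : Fin n, ξ (f ((List.ofFn y).take (k : ℕ))) (y k)

omit [Fintype Y] in
lemma take_ofFn_snoc {n : ℕ} (y : Fin n → Y) (a : Y) {k : ℕ} (hk : k ≤ n) :
    (List.ofFn (Fin.snoc y a : Fin (n + 1) → Y)).take k = (List.ofFn y).take k := by
  rw [List.ofFn_succ', List.concat_eq_append]
  simp only [Fin.snoc_castSucc]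
  rw [List.take_append_of_le_length (by simpa using hk)]

omit [Fintype X] in
lemma feedbackExp_succ (W : X → Y → ℝ) (f : List Y → X) (n : ℕ) (g : (Fin (n + 1) → Y) → ℝ) :
    feedbackExp W f (n + 1) g =
      feedbackExp W f n fun y => ∑ a, W (f (List.ofFn y)) a * g (Fin.snoc y a) := by
  unfold feedbackExp
  rw [← (Fin.snocEquiv fun _ : Fin (n + 1) => Y).sum_comp, Fintype.sum_prod_type, Finset.sum_comm]
  refine Finset.sum_congr rfl fun y _ => ?_
  rw [Finset.mul_sum]
  refine Finset.sum_congr rfl fun a _ => ?_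
  simp only [Fin.snocEquiv, Equiv.coe_fn_mk]
  rw [Fin.prod_univ_castSucc]
  simp only [Fin.snoc_castSucc, Fin.snoc_last, Fin.val_castSucc, Fin.val_last]
  rw [take_ofFn_snoc y a le_rfl, List.take_of_length_le (by simp)]
  simp only [take_ofFn_snoc y a (Fin.is_lt _).le]
  ring

omit [Fintype X] [Fintype Y] in
lemma pathSum_snoc (ξ : X → Y → ℝ) (f : List Y → X) {n : ℕ} (y : Fin n → Y) (a : Y) :
    pathSum ξ f (Fin.snoc y a : Fin (n + 1) → Y) = pathSum ξ f y + ξ (f (List.ofFn y)) a := by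
  unfold pathSum
  rw [Fin.sum_univ_castSucc]
  simp only [Fin.snoc_castSucc, Fin.snoc_last, Fin.val_castSucc, Fin.val_last]
  rw [take_ofFn_snoc y a le_rfl, List.take_of_length_le (by simp)]
  simp only [take_ofFn_snoc y a (Fin.is_lt _).le]

omit [Fintype X] in
lemma feedbackExp_mono {W : X → Y → ℝ} (hW : ∀ x y, 0 ≤ W x y) (f : List Y → X) {n : ℕ}
    {g h : (Fin n → Y) → ℝ} (hgh : ∀ y, g y ≤ h y) :
    feedbackExp W f n g ≤ feedbackExp W f n h :=
  Finset.sum_le_sum fun y _ =>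
    mul_le_mul_of_nonneg_left (hgh y) (Finset.prod_nonneg fun _ _ => hW _ _)

omit [Fintype X] in
lemma feedbackExp_const {W : X → Y → ℝ} (hW : IsChannel W) (f : List Y → X) (n : ℕ) (c : ℝ) :
    feedbackExp W f n (fun _ => c) = c := by
  induction n with
  | zero => simp [feedbackExp]
  | succ n ih =>
    rw [feedbackExp_succ]
    simp only [← Finset.sum_mul, (hW _).2, one_mul]
    exact ih

omit [Fintype X] in
lemma feedbackExp_add (W : X → Y → ℝ) (f : List Y → X) (n : ℕ) (g h : (Fin n → Y) → ℝ) :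
    feedbackExp W f n (fun y => g y + h y) = feedbackExp W f n g + feedbackExp W f n h := by
  simp only [feedbackExp, mul_add, Finset.sum_add_distrib]

omit [Fintype X] in
lemma feedbackExp_pathSum_le {W : X → Y → ℝ} (hW : IsChannel W) (ξ : X → Y → ℝ)
    (f : List Y → X) (F : ℕ → ℝ → ℝ) (e : ℝ) (n : ℕ)
    (hF : ∀ k < n, ∀ x s, ∑ y, W x y * F (k + 1) (s + ξ x y) ≤ F k s + e) :
    feedbackExp W f n (fun y => F n (pathSum ξ f y)) ≤ F 0 0 + n * e := by
  induction n with
  | zero => simp [feedbackExp, pathSum]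
  | succ n ih =>
    rw [feedbackExp_succ]
    simp only [pathSum_snoc]
    have h1 := feedbackExp_mono (fun x y => (hW x).1 y) f
      (fun y : Fin n → Y => hF n (Nat.lt_succ_self n) (f (List.ofFn y)) (pathSum ξ f y))
    have h2 := ih fun k hk => hF k (hk.trans (Nat.lt_succ_self n))
    rw [feedbackExp_add, feedbackExp_const hW] at h1
    push_cast
    linarith

lemma tendsto_sqrt_mul_atTop {V : ℝ} (hV : 0 < V) :
    Tendsto (fun n : ℕ => Real.sqrt (n * V)) atTop atTop :=
  Real.tendsto_sqrt_atTop.comp (tendsto_natCast_atTop_atTop.atTop_mul_const hV)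

lemma heat_step {τ e : ℝ} (hτ : 0 < τ) (he : 0 < e) : ∃ δ : ℝ, 0 < δ ∧
    ∀ (w ι : Y → ℝ) (C V : ℝ), IsDist w → 0 < V →
      ((∑ y, w y * ι y = C ∧ |∑ y, w y * (ι y - C) ^ 2 - V| ≤ δ * V) ∨ ∑ y, w y * ι y < C) →
      ∀ᶠ n : ℕ in atTop, ∀ v, τ ≤ v → ∀ s,
        ∑ y, w y * heat v (s + (ι y - C) / Real.sqrt (n * V)) ≤ heat (v + 1 / n) s + e / n := by
  obtain ⟨K, hK, hexp⟩ := heat_expansion hτ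
  refine ⟨e / K, by positivity, fun w ι C V hw hV hcase => ?_⟩
  set D := ∑ y, w y * ι y with hD
  set Q := ∑ y, w y * (ι y - C) ^ 2 with hQ
  set B := ∑ y, w y * |ι y - C| ^ 3 with hB
  have hr := tendsto_sqrt_mul_atTop hV
  have hsmall : ∀ᶠ n : ℕ in atTop, K * B / V / Real.sqrt (n * V) + K / n < e / 2 := by
    have h := (hr.const_div_atTop (K * B / V)).add (tendsto_const_div_atTop_nhds_zero_nat K)
    rw [add_zero] at h
    exact h.eventually_lt_const (by positivity)
  have hdrift : ∀ᶠ n : ℕ in atTop, ∀ v, τ ≤ v → ∀ s,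
      -heatS v s * ((C - D) * Real.sqrt (n * V) / V) + heatSS v s / 2 * (Q / V - 1) ≤ e / 2 := by
    rcases hcase with ⟨h1, h2⟩ | h1
    · refine Eventually.of_forall fun n v hv s => ?_
      have h3 : |Q / V - 1| ≤ e / K := by
        rw [show Q / V - 1 = (Q - V) / V by field_simp, abs_div, abs_of_pos hV, div_le_iff₀ hV]
        exact h2
      have h4 : |heatSS v s / 2 * (Q / V - 1)| ≤ K / 2 * (e / K) := by
        rw [abs_mul, abs_div, abs_two]
        have := (hexp v hv s).2.2.1
        gcongr
      have h5 := (abs_le.1 h4).2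
      have h6 : K / 2 * (e / K) = e / 2 := by field_simp
      rw [h1, sub_self, zero_mul, zero_div, mul_zero, zero_add]
      linarith
    · have hd : 0 < C - D := by linarith
      set c := |Q / V - 1| + 1 with hc
      have hc0 : 0 < c := by positivity
      set L := c * K / e with hL
      have hL0 : 0 < L := by positivity
      filter_upwards [hr.eventually_ge_atTop (L * c / 2 * V / (C - D))] with n hn v hv s
      have h4 : |heatSS v s / 2 * (Q / V - 1)| ≤ (L * heatS v s + K / L) / 2 * c := by
        rw [abs_mul, abs_div, abs_two]
        have := (hexp v hv s).2.2.2 L hL0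
        have h0 := heatS_nonneg v s
        have h9 : |Q / V - 1| ≤ c := by linarith
        gcongr
      have h5 := (abs_le.1 h4).2
      have h6 : K / L / 2 * c = e / 2 := by rw [hL]; field_simp
      have h7 : L * c / 2 ≤ (C - D) * Real.sqrt (n * V) / V := by
        rw [div_le_iff₀ hd] at hn
        rw [le_div_iff₀ hV]
        linarith
      nlinarith [mul_le_mul_of_nonneg_left h7 (heatS_nonneg v s)]
  filter_upwards [hsmall, hdrift, eventually_gt_atTop 0] with n h1 h2 hn v hv s
  have hn0 : (0 : ℝ) < n := Nat.cast_pos.2 hn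
  obtain ⟨hT1, hT2, -, -⟩ := hexp v hv s
  specialize h2 v hv s
  have hr0 : 0 < Real.sqrt (n * V) := Real.sqrt_pos.2 (by positivity)
  have hr2 : Real.sqrt (n * V) ^ 2 = n * V := Real.sq_sqrt (by positivity)
  generalize Real.sqrt (n * V) = r at *
  have hT2' := hT2 (1 / n) (by positivity)
  have hsum : ∑ y, w y * heat v (s + (ι y - C) / r) ≤
      heat v s - heatS v s * ((C - D) / r) + heatSS v s / 2 * (Q / r ^ 2) + K * (B / r ^ 3) := by
    calc ∑ y, w y * heat v (s + (ι y - C) / r)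
        ≤ ∑ y, w y * (heat v s + heatS v s * ((ι y - C) / r)
            + heatSS v s / 2 * ((ι y - C) / r) ^ 2 + K * |(ι y - C) / r| ^ 3) :=
          Finset.sum_le_sum fun y _ => mul_le_mul_of_nonneg_left (hT1 _) (hw.1 y)
      _ = ∑ y, (w y * (heat v s - heatS v s / r * C) + w y * ι y * (heatS v s / r)
            + w y * (ι y - C) ^ 2 * (heatSS v s / 2 / r ^ 2)
            + w y * |ι y - C| ^ 3 * (K / r ^ 3)) := by
          refine Finset.sum_congr rfl fun y _ => ?_
          rw [abs_div, abs_of_pos hr0]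
          ring
      _ = _ := by
          simp only [Finset.sum_add_distrib, ← Finset.sum_mul]
          rw [← hD, ← hQ, ← hB, hw.2]
          ring
  have hV' : V = r ^ 2 / n := by rw [hr2]; field_simp
  have e1 : (C - D) / r = (C - D) * r / V / n := by rw [hV']; field_simp
  have e2 : Q / r ^ 2 = Q / V / n := by rw [hV']; field_simp
  have e3 : K * (B / r ^ 3) = K * B / V / r / n := by rw [hV']; field_simp
  rw [e1, e2, e3] at hsum
  have h3 : (-heatS v s * ((C - D) * r / V) + heatSS v s / 2 * (Q / V - 1)
      + (K * B / V / r + K / n)) / n ≤ e / n := by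
    gcongr; linarith
  have e4 : (-heatS v s * ((C - D) * r / V) + heatSS v s / 2 * (Q / V - 1)
      + (K * B / V / r + K / n)) / n = -heatS v s * ((C - D) * r / V / n)
      + heatSS v s / 2 * (Q / V / n) - heatSS v s / 2 * (1 / n) + K * B / V / r / n
      + K * (1 / n) ^ 2 := by field_simp; ring
  linarith

lemma gcdf_nonneg (t : ℝ) : 0 ≤ gcdf t :=
  setIntegral_nonneg measurableSet_Iic fun u _ => (gpdf_pos u).le

lemma gcdf_le_one (t : ℝ) : gcdf t ≤ 1 :=
  strictMono_gcdf.monotone.ge_of_tendsto tendsto_gcdf_atTop t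

omit [Fintype X] in
lemma errProb_eq (W : X → Y → ℝ) (n M : ℕ) (enc : Fin M → List Y → X)
    (dec : (Fin n → Y) → Fin M) :
    errProb W n M enc dec =
      (M : ℝ)⁻¹ * ∑ m, feedbackExp W (enc m) n (fun y => if dec y = m then 0 else 1) := rfl

omit [Fintype X] [Fintype Y] in
lemma prod_eq_prod_mul_exp_pathSum {W : X → Y → ℝ} {q : Y → ℝ} (hW : ∀ x y, 0 < W x y)
    (hq : ∀ y, 0 < q y) (f : List Y → X) {n : ℕ} (y : Fin n → Y) :
    ∏ k : Fin n, W (f ((List.ofFn y).take (k : ℕ))) (y k) =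
      (∏ k, q (y k)) * Real.exp (pathSum (fun x y => Real.log (W x y / q y)) f y) := by
  rw [pathSum, Real.exp_sum, ← Finset.prod_mul_distrib]
  refine Finset.prod_congr rfl fun k _ => ?_
  rw [Real.exp_log (div_pos (hW _ _) (hq _)), mul_div_cancel₀ _ (hq _).ne']

lemma sum_prod_eq_one {q : Y → ℝ} (hq : ∑ y, q y = 1) (n : ℕ) :
    ∑ y : Fin n → Y, ∏ k, q (y k) = 1 := by
  rw [← Fintype.piFinset_univ, ← Finset.prod_univ_sum]
  simp [hq]

omit [Fintype X] in
lemma errProb_lower_bound {W : X → Y → ℝ} {q : Y → ℝ} (hWc : IsChannel W)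
    (hW : ∀ x y, 0 < W x y) (hq : ∀ y, 0 < q y) (hq1 : ∑ y, q y = 1) {n M : ℕ} (hM : 0 < M)
    (enc : Fin M → List Y → X) (dec : (Fin n → Y) → Fin M) (γ a b : ℝ) (G : ℝ → ℝ)
    (hG : ∀ s, s ≤ γ → G s ≤ 1 + a) (hG' : ∀ s, γ < s → G s ≤ a)
    (hexp : ∀ f, b ≤ feedbackExp W f n
      fun y => G (pathSum (fun x y => Real.log (W x y / q y)) f y)) :
    b - a - Real.exp γ / M ≤ errProb W n M enc dec := by
  have hM0 : (0 : ℝ) < M := Nat.cast_pos.2 hM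
  have h1 : ∀ m, b ≤ feedbackExp W (enc m) n (fun y => if dec y = m then 0 else 1) + a +
      Real.exp γ * ∑ y : Fin n → Y, (∏ k, q (y k)) * (if dec y = m then 1 else 0) := by
    intro m
    refine (hexp (enc m)).trans ?_
    rw [← feedbackExp_const hWc (enc m) n a, ← feedbackExp_add, Finset.mul_sum, feedbackExp,
      feedbackExp, ← Finset.sum_add_distrib]
    refine Finset.sum_le_sum fun y _ => ?_
    have hp := prod_eq_prod_mul_exp_pathSum hW hq (enc m) y
    have hw : 0 ≤ ∏ k : Fin n, W (enc m ((List.ofFn y).take (k : ℕ))) (y k) :=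
      Finset.prod_nonneg fun _ _ => (hW _ _).le
    have hqn : 0 ≤ ∏ k, q (y k) := Finset.prod_nonneg fun _ _ => (hq _).le
    generalize pathSum (fun x y => Real.log (W x y / q y)) (enc m) y = S at *
    generalize ∏ k, q (y k) = Q at *
    generalize ∏ k : Fin n, W (enc m ((List.ofFn y).take (k : ℕ))) (y k) = w at *
    rcases le_or_gt S γ with hS | hS
    · have := hG S hS
      split_ifs
      · have : w ≤ Real.exp γ * Q := by
          rw [hp, mul_comm]; gcongr
        nlinarith
      · nlinarith
    · have := hG' S hS
      have := mul_nonneg (Real.exp_pos γ).le hqn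
      split_ifs <;> nlinarith
  have h2 := Finset.sum_le_sum fun m (_ : m ∈ Finset.univ) => h1 m
  have h3 : ∑ m : Fin M, ∑ y : Fin n → Y, (∏ k, q (y k)) * (if dec y = m then 1 else 0) = 1 := by
    rw [Finset.sum_comm]
    simp [sum_prod_eq_one hq1]
  simp only [Finset.sum_add_distrib, ← Finset.mul_sum, h3, Finset.sum_const, Finset.card_univ,
    Fintype.card_fin, nsmul_eq_mul, mul_one] at h2
  rw [errProb_eq]
  have h4 : b - a - Real.exp γ / M = (M : ℝ)⁻¹ * (M * b - M * a - Real.exp γ) := by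
    field_simp
  rw [h4]
  gcongr
  linarith

lemma converse {t ε η : ℝ} (ht : gcdf t = ε) (hη : 0 < η) : ∃ δ : ℝ, 0 < δ ∧
    ∀ (W : X → Y → ℝ) (q : Y → ℝ) (C V : ℝ), IsChannel W → (∀ x y, 0 < W x y) →
      (∀ y, 0 < q y) → ∑ y, q y = 1 → 0 < V →
      (∀ x, (∑ y, W x y * Real.log (W x y / q y) = C ∧
          |∑ y, W x y * (Real.log (W x y / q y) - C) ^ 2 - V| ≤ δ * V) ∨
        ∑ y, W x y * Real.log (W x y / q y) < C) →
      ∀ᶠ n : ℕ in atTop, ∀ M : ℕ, 0 < M → ∀ enc dec, errProb W n M enc dec < ε + δ →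
        (M : ℝ) ≤ Real.exp (n * C + (t + η) * Real.sqrt (n * V)) := by
  set ρ := t + η / 4 with hρ
  set gap := gcdf ρ - ε with hgap
  have hgap0 : 0 < gap := by
    rw [hgap, ← ht, sub_pos]; exact strictMono_gcdf (by linarith)
  obtain ⟨τ, hτ, hτ1, hτ2⟩ : ∃ τ : ℝ, 0 < τ ∧ ε + 3 * gap / 4 < gcdf (ρ / Real.sqrt (τ + 1)) ∧
      gcdf (-(η / 4 / Real.sqrt τ)) < gap / 4 := by
    have h1 : Tendsto (fun τ : ℝ => gcdf (ρ / Real.sqrt (τ + 1))) (nhdsWithin 0 (Ioi 0))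
        (nhds (gcdf ρ)) := by
      have : ContinuousAt (fun τ : ℝ => gcdf (ρ / Real.sqrt (τ + 1))) 0 := by
        refine continuous_gcdf.continuousAt.comp (continuousAt_const.div (by fun_prop) (by simp))
      have h := this.tendsto.mono_left (nhdsWithin_le_nhds (s := Ioi 0))
      simpa using h
    have h2 : Tendsto (fun τ : ℝ => gcdf (-(η / 4 / Real.sqrt τ))) (nhdsWithin 0 (Ioi 0))
        (nhds 0) := by
      refine tendsto_gcdf_atBot.comp (tendsto_neg_atTop_atBot.comp ?_)
      have h3 : Tendsto Real.sqrt (nhdsWithin 0 (Ioi 0)) (nhdsWithin 0 (Ioi 0)) := by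
        refine tendsto_nhdsWithin_iff.2 ⟨?_, ?_⟩
        · have := (Real.continuous_sqrt.tendsto 0).mono_left (nhdsWithin_le_nhds (s := Ioi 0))
          simpa using this
        · filter_upwards [self_mem_nhdsWithin] with x hx using Real.sqrt_pos.2 hx
      simp only [div_eq_mul_inv _ (Real.sqrt _)]
      exact (tendsto_inv_nhdsGT_zero.comp h3).const_mul_atTop (by positivity)
    obtain ⟨τ, h⟩ := ((h1.eventually_const_lt (show ε + 3 * gap / 4 < gcdf ρ by linarith)).and
      ((h2.eventually_lt_const (show 0 < gap / 4 by linarith)).and self_mem_nhdsWithin)).exists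
    exact ⟨τ, h.2.2, h.1, h.2.1⟩
  obtain ⟨δ, hδ, hstep⟩ := heat_step (Y := Y) hτ (show 0 < gap / 8 by linarith)
  refine ⟨min δ (gap / 8), lt_min hδ (by linarith), fun W q C V hWc hW hq hq1 hV hcase => ?_⟩
  have hstep' : ∀ᶠ n : ℕ in atTop, ∀ x, ∀ v, τ ≤ v → ∀ s,
      ∑ y, W x y * heat v (s + (Real.log (W x y / q y) - C) / Real.sqrt (n * V)) ≤
        heat (v + 1 / n) s + gap / 8 / n := by
    rw [eventually_all]
    intro x
    refine hstep (W x) (fun y => Real.log (W x y / q y)) C V (hWc x) hV ?_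
    refine (hcase x).imp_left fun h => ⟨h.1, h.2.trans ?_⟩
    gcongr
    exact min_le_left _ _
  have hsmall : ∀ᶠ n : ℕ in atTop, Real.exp (-(η / 2 * Real.sqrt (n * V))) < gap / 8 := by
    have : Tendsto (fun n : ℕ => Real.exp (-(η / 2 * Real.sqrt (n * V)))) atTop (nhds 0) :=
      Real.tendsto_exp_neg_atTop_nhds_zero.comp
        ((tendsto_sqrt_mul_atTop hV).const_mul_atTop (by positivity))
    exact this.eventually_lt_const (by linarith)
  filter_upwards [hstep', hsmall, eventually_gt_atTop 0] with n h1 h2 hn M hM enc dec herr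
  by_contra! hlt
  have hn0 : (0 : ℝ) < n := Nat.cast_pos.2 hn
  have hr0 : 0 < Real.sqrt (n * V) := Real.sqrt_pos.2 (by positivity)
  set r := Real.sqrt (n * V) with hr
  set i : X → Y → ℝ := fun x y => Real.log (W x y / q y) with hi
  have hpath : ∀ f (y : Fin n → Y), pathSum (fun x y => (i x y - C) / r) f y =
      (pathSum i f y - n * C) / r := by
    intro f y
    simp only [pathSum, ← Finset.sum_div, Finset.sum_sub_distrib]
    simp
  have hlow := errProb_lower_bound hWc hW hq hq1 hM enc dec (n * C + (t + η / 2) * r)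
    (gcdf (-(η / 4 / Real.sqrt τ))) (gcdf (ρ / Real.sqrt (τ + 1)) - gap / 8)
    (fun s => -heat τ ((s - n * C) / r - ρ))
    (fun s _ => by
      simp only [heat, neg_neg]
      linarith [gcdf_le_one (-(((s - n * C) / r - ρ) / Real.sqrt τ)),
        gcdf_nonneg (-(η / 4 / Real.sqrt τ))])
    (fun s hs => by
      simp only [heat, neg_neg]
      apply strictMono_gcdf.monotone
      rw [neg_le_neg_iff]
      gcongr
      rw [le_sub_iff_add_le, le_div_iff₀ hr0, hρ]
      linarith)
    (fun f => by
      have hdp := feedbackExp_pathSum_le hWc (fun x y => (i x y - C) / r) f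
        (fun k s => heat (τ + (n - k) / n) (s - ρ)) (gap / 8 / n) n (fun k hk x s => by
          have hk' : ((k : ℝ) + 1) ≤ n := by exact_mod_cast hk
          have := h1 x (τ + (n - (k + 1)) / n)
            (le_add_of_nonneg_right (div_nonneg (by linarith) hn0.le)) (s - ρ)
          have e : τ + ((n : ℝ) - (k + 1)) / n + 1 / n = τ + (n - k) / n := by
            field_simp; ring
          rw [e] at this
          refine le_trans (le_of_eq ?_) this
          push_cast
          refine Finset.sum_congr rfl fun y _ => ?_
          rw [add_sub_right_comm])
      have e1 : (n : ℝ) * (gap / 8 / n) = gap / 8 := by field_simp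
      rw [e1] at hdp
      simp only [hpath, sub_self, zero_div, add_zero, Nat.cast_zero, sub_zero, div_self hn0.ne',
        zero_sub] at hdp
      have e2 : heat (τ + 1) (-ρ) = -gcdf (ρ / Real.sqrt (τ + 1)) := by
        rw [heat, neg_div, neg_neg]
      rw [e2] at hdp
      have e3 : feedbackExp W f n (fun y => -heat τ ((pathSum i f y - n * C) / r - ρ)) =
          -feedbackExp W f n (fun y => heat τ ((pathSum i f y - n * C) / r - ρ)) := by
        simp only [feedbackExp, mul_neg, Finset.sum_neg_distrib]
      rw [e3]
      linarith)
  have hM' : Real.exp (n * C + (t + η / 2) * r) / M < gap / 8 := by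
    refine lt_of_le_of_lt ?_ h2
    have hM0 : (0 : ℝ) < M := Nat.cast_pos.2 hM
    rw [div_le_iff₀ hM0]
    calc Real.exp (n * C + (t + η / 2) * r)
        = Real.exp (-(η / 2 * r)) * Real.exp (n * C + (t + η) * r) := by
          rw [← Real.exp_add]; ring_nf
      _ ≤ _ := by gcongr
  have := min_le_right δ (gap / 8)
  linarith

/-- Relative entropy of probability mass functions on a finite alphabet. -/
def klSum (p q : Y → ℝ) : ℝ := ∑ y, p y * Real.log (p y / q y)

lemma klSum_nonneg {p q : Y → ℝ} (hp : ∀ y, 0 < p y) (hq : ∀ y, 0 < q y)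
    (hp1 : ∑ y, p y = 1) (hq1 : ∑ y, q y = 1) : 0 ≤ klSum p q := by
  have h : ∀ y, p y - q y ≤ p y * Real.log (p y / q y) := fun y => by
    have h1 := Real.one_sub_inv_le_log_of_pos (div_pos (hp y) (hq y))
    have h2 := mul_le_mul_of_nonneg_left h1 (hp y).le
    have h3 : p y * (1 - (p y / q y)⁻¹) = p y - q y := by
      have := (hp y).ne'
      field_simp
    linarith
  have := Finset.sum_le_sum fun y (_ : y ∈ Finset.univ) => h y
  rw [Finset.sum_sub_distrib, hp1, hq1, sub_self] at this
  exact this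

lemma klSum_pos {p q : Y → ℝ} (hp : ∀ y, 0 < p y) (hq : ∀ y, 0 < q y)
    (hp1 : ∑ y, p y = 1) (hq1 : ∑ y, q y = 1) (hne : p ≠ q) : 0 < klSum p q := by
  have h3 : ∀ y, p y * -(q y / p y - 1) = p y - q y := fun y => by
    have := (hp y).ne'
    field_simp
    ring
  have hlog : ∀ y, Real.log (p y / q y) = -Real.log (q y / p y) := fun y => by
    rw [← Real.log_inv, inv_div]
  have h : ∀ y, p y - q y ≤ p y * Real.log (p y / q y) := fun y => by
    rw [← h3, hlog]
    have := Real.log_le_sub_one_of_pos (div_pos (hq y) (hp y))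
    exact mul_le_mul_of_nonneg_left (neg_le_neg this) (hp y).le
  obtain ⟨y, hy⟩ := Function.ne_iff.1 hne
  have hs : p y - q y < p y * Real.log (p y / q y) := by
    rw [← h3, hlog]
    have := Real.log_lt_sub_one_of_pos (div_pos (hq y) (hp y)) (fun h1 => hy ?_)
    · exact mul_lt_mul_of_pos_left (neg_lt_neg this) (hp y)
    · rw [div_eq_one_iff_eq (hp y).ne'] at h1
      exact h1.symm
  have := Finset.sum_lt_sum (fun y (_ : y ∈ Finset.univ) => h y) ⟨y, Finset.mem_univ y, hs⟩
  rw [Finset.sum_sub_distrib, hp1, hq1, sub_self] at this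
  exact this

lemma klSum_le_chiSq {p q : Y → ℝ} (hp : ∀ y, 0 < p y) (hq : ∀ y, 0 < q y)
    (hp1 : ∑ y, p y = 1) (hq1 : ∑ y, q y = 1) :
    klSum p q ≤ ∑ y, (p y - q y) ^ 2 / q y := by
  have h : ∀ y, p y * Real.log (p y / q y) ≤ (p y - q y) ^ 2 / q y + (p y - q y) := fun y => by
    have h1 := Real.log_le_sub_one_of_pos (div_pos (hp y) (hq y))
    have h2 := mul_le_mul_of_nonneg_left h1 (hp y).le
    have h3 : p y * (p y / q y - 1) = (p y - q y) ^ 2 / q y + (p y - q y) := by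
      have := (hq y).ne'
      field_simp
      ring
    linarith
  have := Finset.sum_le_sum fun y (_ : y ∈ Finset.univ) => h y
  rw [Finset.sum_add_distrib, Finset.sum_sub_distrib, hp1, hq1, sub_self, add_zero] at this
  exact this

omit [Fintype Y] in
lemma outDist_pos {P : X → ℝ} {W : X → Y → ℝ} (hP : IsDist P) (hW : ∀ x y, 0 < W x y) (y : Y) :
    0 < outDist P W y := by
  have h0 : 0 ≤ outDist P W y := Finset.sum_nonneg fun x _ => mul_nonneg (hP.1 x) (hW x y).le
  refine h0.lt_of_ne fun h => ?_
  have h1 := (Finset.sum_eq_zero_iff_of_nonneg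
    (fun x _ => mul_nonneg (hP.1 x) (hW x y).le)).1 h.symm
  have h2 : ∑ x, P x = 0 := Finset.sum_eq_zero fun x hx =>
    (mul_eq_zero.1 (h1 x hx)).resolve_right (hW x y).ne'
  rw [hP.2] at h2
  exact one_ne_zero h2

lemma sum_outDist {P : X → ℝ} {W : X → Y → ℝ} (hP : IsDist P) (hW : IsChannel W) :
    ∑ y, outDist P W y = 1 := by
  unfold outDist
  rw [Finset.sum_comm]
  simp only [← Finset.mul_sum, (hW _).2, mul_one, hP.2]

lemma mutInfo_eq_sum_klSum (P : X → ℝ) (W : X → Y → ℝ) :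
    mutInfo P W = ∑ x, P x * klSum (W x) (outDist P W) := by
  simp only [mutInfo, klSum, Finset.mul_sum, mul_assoc]

lemma sum_mul_klSum_eq {P : X → ℝ} {W : X → Y → ℝ} {q : Y → ℝ} (hP : IsDist P)
    (hW : ∀ x y, 0 < W x y) (hq : ∀ y, 0 < q y) :
    ∑ x, P x * klSum (W x) q = mutInfo P W + klSum (outDist P W) q := by
  have h1 : klSum (outDist P W) q =
      ∑ x, ∑ y, P x * W x y * Real.log (outDist P W y / q y) := by
    rw [Finset.sum_comm]
    simp only [klSum, ← Finset.sum_mul]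
    rfl
  rw [h1, mutInfo, ← Finset.sum_add_distrib]
  refine Finset.sum_congr rfl fun x _ => ?_
  rw [klSum, Finset.mul_sum, ← Finset.sum_add_distrib]
  refine Finset.sum_congr rfl fun y _ => ?_
  have h2 := outDist_pos hP hW y
  rw [← mul_add, ← Real.log_mul (div_pos (hW x y) h2).ne' (div_pos h2 (hq y)).ne',
    div_mul_div_cancel₀ h2.ne', mul_assoc]

lemma continuousOn_mutInfo {W : X → Y → ℝ} (hW : ∀ x y, 0 < W x y) :
    ContinuousOn (fun P : X → ℝ => mutInfo P W) {P | IsDist P} := by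
  unfold mutInfo
  refine continuousOn_finsetSum _ fun x _ => continuousOn_finsetSum _ fun y _ => ?_
  have hc : Continuous fun P : X → ℝ => outDist P W y := by
    unfold outDist; fun_prop
  refine ContinuousOn.mul (by fun_prop) (ContinuousOn.log ?_ fun P hP => ?_)
  · exact continuousOn_const.div hc.continuousOn fun P hP => (outDist_pos hP hW y).ne'
  · exact (div_pos (hW x y) (outDist_pos hP hW y)).ne'

lemma isDist_single (x : X) : IsDist (Pi.single x (1 : ℝ) : X → ℝ) := by
  refine ⟨fun x' => ?_, by simp⟩
  rw [Pi.single_apply]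
  split_ifs <;> norm_num

lemma bddAbove_mutInfo {W : X → Y → ℝ} (hW : ∀ x y, 0 < W x y) :
    BddAbove {c | ∃ P, IsDist P ∧ mutInfo P W = c} :=
  ((isCompact_stdSimplex ℝ X).image_of_continuousOn (continuousOn_mutInfo hW)).bddAbove

lemma mutInfo_le_capacity {P : X → ℝ} {W : X → Y → ℝ} (hP : IsDist P) (hW : ∀ x y, 0 < W x y) :
    mutInfo P W ≤ capacity W :=
  le_csSup (bddAbove_mutInfo hW) ⟨P, hP, rfl⟩

lemma capacityAchievers_nonempty [Nonempty X] {W : X → Y → ℝ} (hW : ∀ x y, 0 < W x y) :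
    (capacityAchievers W).Nonempty := by
  obtain ⟨P, hP, hmax⟩ := (isCompact_stdSimplex ℝ X).exists_isMaxOn
    ⟨_, isDist_single (Classical.arbitrary X)⟩ (continuousOn_mutInfo hW)
  refine ⟨P, hP, le_antisymm (mutInfo_le_capacity hP hW) ?_⟩
  refine csSup_le ⟨_, P, hP, rfl⟩ ?_
  rintro _ ⟨P', hP', rfl⟩
  exact hmax hP'

lemma exists_outDist_eq_qStar [Nonempty X] {W : X → Y → ℝ} (hW : ∀ x y, 0 < W x y) :
    ∃ P ∈ capacityAchievers W, outDist P W = qStar W := by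
  have h := capacityAchievers_nonempty hW
  exact ⟨h.choose, h.choose_spec, by rw [qStar, dif_pos h]⟩

lemma klSum_qStar_le_capacity [Nonempty X] {W : X → Y → ℝ} (hWc : IsChannel W)
    (hW : ∀ x y, 0 < W x y) (x : X) : klSum (W x) (qStar W) ≤ capacity W := by
  obtain ⟨P, ⟨hP, hPC⟩, hPq⟩ := exists_outDist_eq_qStar hW
  rw [← hPq]
  set q := outDist P W with hq
  have hq0 := outDist_pos hP hW
  set K := ∑ y, (W x y - q y) ^ 2 / q y with hK
  have key : ∀ t : ℝ, 0 < t → t ≤ 1 → klSum (W x) q - capacity W ≤ t * K := by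
    intro t ht0 ht1
    set Q : X → ℝ := fun x' => (1 - t) * P x' + t * (Pi.single x (1 : ℝ) : X → ℝ) x' with hQ
    have hQd : IsDist Q := by
      refine ⟨fun x' => add_nonneg (mul_nonneg (by linarith) (hP.1 x'))
        (mul_nonneg ht0.le ((isDist_single x).1 x')), ?_⟩
      simp only [hQ, Finset.sum_add_distrib, ← Finset.mul_sum, hP.2, (isDist_single x).2]
      ring
    have hlin : ∀ g : X → ℝ, ∑ x', Q x' * g x' = (1 - t) * ∑ x', P x' * g x' + t * g x := by
      intro g
      simp only [hQ, add_mul, Finset.sum_add_distrib, mul_assoc, ← Finset.mul_sum]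
      simp [Pi.single_apply]
    have hout : ∀ y, outDist Q W y = (1 - t) * q y + t * W x y := fun y => hlin fun x' => W x' y
    have h1 := sum_mul_klSum_eq hQd hW hq0
    have h2 := mutInfo_le_capacity hQd hW
    have h3 := klSum_le_chiSq (outDist_pos hQd hW) hq0 (sum_outDist hQd hWc) (sum_outDist hP hWc)
    have h4 : ∑ y, (outDist Q W y - outDist P W y) ^ 2 / outDist P W y = t ^ 2 * K := by
      rw [hK, Finset.mul_sum]
      refine Finset.sum_congr rfl fun y _ => ?_
      rw [hout, ← hq]
      ring
    rw [hlin, ← hq, ← mutInfo_eq_sum_klSum, hPC] at h1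
    rw [h4] at h3
    have h5 : t * (klSum (W x) q - capacity W) ≤ t * (t * K) := by nlinarith
    exact le_of_mul_le_mul_left h5 ht0
  by_contra! hlt
  have hlim : Tendsto (fun t : ℝ => t * K) (nhdsWithin 0 (Ioi 0)) (nhds 0) := by
    have : Tendsto (fun t : ℝ => t * K) (nhds 0) (nhds (0 * K)) :=
      (continuous_id.mul continuous_const).tendsto 0
    rw [zero_mul] at this
    exact this.mono_left nhdsWithin_le_nhds
  obtain ⟨t, h1, h2⟩ := ((hlim.eventually_lt_const
    (show 0 < klSum (W x) q - capacity W by linarith)).and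
      (Ioc_mem_nhdsGT (zero_lt_one' ℝ))).exists
  linarith [key t h2.1 h2.2]

lemma qStar_pos [Nonempty X] {W : X → Y → ℝ} (hW : ∀ x y, 0 < W x y) (y : Y) :
    0 < qStar W y := by
  obtain ⟨P, ⟨hP, -⟩, hPq⟩ := exists_outDist_eq_qStar hW
  rw [← hPq]
  exact outDist_pos hP hW y

lemma sum_qStar [Nonempty X] {W : X → Y → ℝ} (hWc : IsChannel W) (hW : ∀ x y, 0 < W x y) :
    ∑ y, qStar W y = 1 := by
  obtain ⟨P, ⟨hP, -⟩, hPq⟩ := exists_outDist_eq_qStar hW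
  rw [← hPq]
  exact sum_outDist hP hWc

lemma klSum_qStar_eq_capacity [Nonempty X] {W : X → Y → ℝ} (hWc : IsChannel W)
    (hW : ∀ x y, 0 < W x y) {P : X → ℝ} (hP : P ∈ capacityAchievers W) {x : X} (hx : P x ≠ 0) :
    klSum (W x) (qStar W) = capacity W := by
  have hle := klSum_qStar_le_capacity hWc hW
  have h1 := sum_mul_klSum_eq hP.1 hW (qStar_pos hW)
  have h2 := klSum_nonneg (outDist_pos hP.1 hW) (qStar_pos hW) (sum_outDist hP.1 hWc)
    (sum_qStar hWc hW)
  rw [hP.2] at h1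
  have hnn : ∀ x ∈ Finset.univ, 0 ≤ P x * (capacity W - klSum (W x) (qStar W)) :=
    fun x _ => mul_nonneg (hP.1.1 x) (by linarith [hle x])
  have h3 : ∑ x, P x * (capacity W - klSum (W x) (qStar W)) = 0 := by
    refine le_antisymm ?_ (Finset.sum_nonneg hnn)
    simp only [mul_sub, Finset.sum_sub_distrib, ← Finset.sum_mul, hP.1.2]
    linarith
  have h4 := (Finset.sum_eq_zero_iff_of_nonneg hnn).1 h3 x (Finset.mem_univ x)
  have := (mul_eq_zero.1 h4).resolve_left hx
  linarith

lemma capacity_pos {W : X → Y → ℝ} (hWc : IsChannel W) (hW : ∀ x y, 0 < W x y) {P : X → ℝ}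
    (hP : IsDist P) {x₀ : X} (hx₀ : 0 < P x₀) (hne : W x₀ ≠ outDist P W) : 0 < capacity W := by
  refine lt_of_lt_of_le ?_ (mutInfo_le_capacity hP hW)
  rw [mutInfo_eq_sum_klSum]
  have hq := outDist_pos hP hW
  have hq1 := sum_outDist hP hWc
  refine Finset.sum_pos' (fun x _ => mul_nonneg (hP.1 x)
    (klSum_nonneg (hW x) hq (hWc x).2 hq1)) ⟨x₀, Finset.mem_univ _, mul_pos hx₀ ?_⟩
  exact klSum_pos (hW x₀) hq (hWc x₀).2 hq1 hne

lemma abs_variance_sub_two_klSum_le {p q : Y → ℝ} {κ : ℝ} (hp : ∀ y, 0 < p y)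
    (hq : ∀ y, 0 < q y) (hp1 : ∑ y, p y = 1) (hq1 : ∑ y, q y = 1)
    (hκ : ∀ y, |Real.log (p y / q y)| ≤ κ) (hκ1 : κ ≤ 1 / 9) :
    |∑ y, p y * Real.log (p y / q y) ^ 2 - klSum p q ^ 2 - 2 * klSum p q| ≤
      9 * κ * klSum p q := by
  have hD0 := klSum_nonneg hp hq hp1 hq1
  set D := klSum p q with hD
  set E := ∑ y, p y * Real.log (p y / q y) ^ 2 with hE
  have hE0 : 0 ≤ E := Finset.sum_nonneg fun y _ => mul_nonneg (hp y).le (sq_nonneg _)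
  have hκ0 : 0 ≤ κ := by
    by_contra! h
    have : ∀ y : Y, False := fun y => by linarith [hκ y, abs_nonneg (Real.log (p y / q y))]
    have : IsEmpty Y := ⟨this⟩
    simp at hp1
  have hDκ : D ≤ κ := by
    calc D ≤ ∑ y, p y * κ := Finset.sum_le_sum fun y _ =>
          mul_le_mul_of_nonneg_left ((le_abs_self _).trans (hκ y)) (hp y).le
      _ = κ := by rw [← Finset.sum_mul, hp1, one_mul]
  have hterm : ∀ y, |q y - p y * (1 - Real.log (p y / q y) + Real.log (p y / q y) ^ 2 / 2)| ≤
      κ * (p y * Real.log (p y / q y) ^ 2) := by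
    intro y
    have hqy : q y = p y * Real.exp (-Real.log (p y / q y)) := by
      rw [Real.exp_neg, Real.exp_log (div_pos (hp y) (hq y)), inv_div,
        mul_div_cancel₀ _ (hp y).ne']
    have hl := hκ y
    generalize Real.log (p y / q y) = l at *
    have hb := Real.exp_bound (x := -l) (n := 3) (by rw [abs_neg]; linarith) (by norm_num)
    have e : ∑ m ∈ Finset.range 3, (-l) ^ m / (m.factorial : ℝ) = 1 - l + l ^ 2 / 2 := by
      simp [Finset.sum_range_succ, Nat.factorial]; ring
    rw [e, abs_neg] at hb
    rw [hqy, ← mul_sub, abs_mul, abs_of_pos (hp y)]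
    have h2 : |l| ^ 3 * (((Nat.succ 3 : ℕ) : ℝ) / (((Nat.factorial 3 : ℕ) : ℝ) * ((3 : ℕ) : ℝ)))
        ≤ κ * l ^ 2 := by
      have h3 : |l| ^ 3 ≤ κ * l ^ 2 := by
        rw [← sq_abs l, pow_succ, mul_comm]; gcongr
      have h4 : 0 ≤ |l| ^ 3 := by positivity
      norm_num [Nat.factorial]
      linarith
    calc p y * |Real.exp (-l) - (1 - l + l ^ 2 / 2)| ≤ p y * (κ * l ^ 2) :=
          mul_le_mul_of_nonneg_left (hb.trans h2) (hp y).le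
      _ = _ := by ring
  have hsum := (Finset.abs_sum_le_sum_abs _ _).trans
    (Finset.sum_le_sum fun y (_ : y ∈ Finset.univ) => hterm y)
  rw [← Finset.mul_sum, ← hE] at hsum
  have e : ∑ y, (q y - p y * (1 - Real.log (p y / q y) + Real.log (p y / q y) ^ 2 / 2)) =
      D - E / 2 := by
    rw [hD, klSum, hE, Finset.sum_div, ← Finset.sum_sub_distrib]
    have : ∑ y, (q y - p y) = 0 := by rw [Finset.sum_sub_distrib, hp1, hq1, sub_self]
    rw [← sub_eq_zero, ← Finset.sum_sub_distrib, ← this]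
    refine Finset.sum_congr rfl fun y _ => by ring
  rw [e] at hsum
  obtain ⟨h1, h2⟩ := abs_le.1 hsum
  have hE4 : E ≤ 4 * D := by nlinarith
  have h5 : κ * E ≤ κ * (4 * D) := mul_le_mul_of_nonneg_left hE4 hκ0
  have h6 : D ^ 2 ≤ κ * D := by rw [sq]; gcongr
  rw [abs_le]
  constructor <;> nlinarith [sq_nonneg D]

lemma nu_eq (W : X → Y → ℝ) (x : X) : nu W x =
    ∑ y, W x y * Real.log (W x y / qStar W y) ^ 2 - klSum (W x) (qStar W) ^ 2 := rfl

lemma sum_sq_sub_eq_nu {W : X → Y → ℝ} (hWc : IsChannel W) {x : X} {C : ℝ}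
    (hx : klSum (W x) (qStar W) = C) :
    ∑ y, W x y * (Real.log (W x y / qStar W y) - C) ^ 2 = nu W x := by
  have h : ∑ y, W x y * (Real.log (W x y / qStar W y) - C) ^ 2 =
      ∑ y, W x y * Real.log (W x y / qStar W y) ^ 2 - 2 * C * klSum (W x) (qStar W)
        + C ^ 2 * ∑ y, W x y := by
    rw [klSum, Finset.mul_sum, Finset.mul_sum, ← Finset.sum_sub_distrib,
      ← Finset.sum_add_distrib]
    exact Finset.sum_congr rfl fun y _ => by ring
  rw [h, nu_eq, hx, (hWc x).2]
  ring

section SmallDensity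

variable [Nonempty X] {W : X → Y → ℝ} {κ : ℝ}

lemma abs_nu_sub_le (hWc : IsChannel W) (hW : ∀ x y, 0 < W x y)
    (hκ : ∀ x y, |Real.log (W x y / qStar W y)| ≤ κ) (hκ1 : κ ≤ 1 / 9) {x : X}
    (hx : klSum (W x) (qStar W) = capacity W) :
    |nu W x - 2 * capacity W| ≤ 9 * κ * capacity W := by
  have := abs_variance_sub_two_klSum_le (hW x) (qStar_pos hW) (hWc x).2 (sum_qStar hWc hW)
    (hκ x) hκ1
  rwa [← nu_eq, hx] at this

lemma abs_sum_nu_sub_le (hWc : IsChannel W) (hW : ∀ x y, 0 < W x y)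
    (hκ : ∀ x y, |Real.log (W x y / qStar W y)| ≤ κ) (hκ1 : κ ≤ 1 / 9) {P : X → ℝ}
    (hP : P ∈ capacityAchievers W) :
    |∑ x, P x * nu W x - 2 * capacity W| ≤ 9 * κ * capacity W := by
  have e : ∑ x, P x * nu W x - 2 * capacity W = ∑ x, P x * (nu W x - 2 * capacity W) := by
    simp only [mul_sub, Finset.sum_sub_distrib, ← Finset.sum_mul, hP.1.2, one_mul]
  rw [e]
  calc _ ≤ ∑ x, |P x * (nu W x - 2 * capacity W)| := Finset.abs_sum_le_sum_abs _ _
    _ ≤ ∑ x, P x * (9 * κ * capacity W) := by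
        refine Finset.sum_le_sum fun x _ => ?_
        rw [abs_mul, abs_of_nonneg (hP.1.1 x)]
        by_cases hx : P x = 0
        · simp [hx]
        · exact mul_le_mul_of_nonneg_left
            (abs_nu_sub_le hWc hW hκ hκ1 (klSum_qStar_eq_capacity hWc hW hP hx)) (hP.1.1 x)
    _ = _ := by rw [← Finset.sum_mul, hP.1.2, one_mul]

lemma abs_Vmin_sub_le (hWc : IsChannel W) (hW : ∀ x y, 0 < W x y)
    (hκ : ∀ x y, |Real.log (W x y / qStar W y)| ≤ κ) (hκ1 : κ ≤ 1 / 9) :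
    |Vmin W - 2 * capacity W| ≤ 9 * κ * capacity W := by
  have h := fun P (hP : P ∈ capacityAchievers W) =>
    abs_le.1 (abs_sum_nu_sub_le hWc hW hκ hκ1 hP)
  obtain ⟨P, hP⟩ := capacityAchievers_nonempty hW
  have hlow : 2 * capacity W - 9 * κ * capacity W ∈
      lowerBounds {v | ∃ P ∈ capacityAchievers W, v = ∑ x, P x * nu W x} := by
    rintro _ ⟨P, hP, rfl⟩
    linarith [(h P hP).1]
  have hne : {v | ∃ P ∈ capacityAchievers W, v = ∑ x, P x * nu W x}.Nonempty := ⟨_, P, hP, rfl⟩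
  have h1 := csInf_le ⟨_, hlow⟩ ⟨P, hP, rfl⟩
  have h2 := le_csInf hne hlow
  rw [abs_le, Vmin]
  constructor <;> linarith [(h P hP).2]

lemma abs_Vmax_sub_le (hWc : IsChannel W) (hW : ∀ x y, 0 < W x y)
    (hκ : ∀ x y, |Real.log (W x y / qStar W y)| ≤ κ) (hκ1 : κ ≤ 1 / 9) :
    |Vmax W - 2 * capacity W| ≤ 9 * κ * capacity W := by
  have h := fun P (hP : P ∈ capacityAchievers W) =>
    abs_le.1 (abs_sum_nu_sub_le hWc hW hκ hκ1 hP)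
  obtain ⟨P, hP⟩ := capacityAchievers_nonempty hW
  have hup : 2 * capacity W + 9 * κ * capacity W ∈
      upperBounds {v | ∃ P ∈ capacityAchievers W, v = ∑ x, P x * nu W x} := by
    rintro _ ⟨P, hP, rfl⟩
    linarith [(h P hP).2]
  have hne : {v | ∃ P ∈ capacityAchievers W, v = ∑ x, P x * nu W x}.Nonempty := ⟨_, P, hP, rfl⟩
  have h1 := le_csSup ⟨_, hup⟩ ⟨P, hP, rfl⟩
  have h2 := csSup_le hne hup
  rw [abs_le, Vmax]
  constructor <;> linarith [(h P hP).1]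

end SmallDensity

lemma IsDist.nonempty {P : X → ℝ} (hP : IsDist P) : Nonempty X := by
  by_contra h
  rw [not_nonempty_iff] at h
  have := hP.2
  simp at this

/-- Feinstein's lemma: a code with small maximal error probability, built one codeword at a
time. -/
lemma feinstein {p : X → ℝ} {w : X → Y → ℝ} {q : Y → ℝ} (hp : IsDist p) (hw : IsChannel w)
    (hq : ∀ b, outDist p w b = q b) {γ θ : ℝ} (hγ : 0 < γ) {M : ℕ}
    (h : ∑ a, p a * ∑ b, w a b * (if w a b ≤ γ * q b then 1 else 0) + M / γ < θ) :
    ∀ m ≤ M, ∃ (c : ℕ → X) (d : Y → ℕ),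
      (∀ i < m, 1 - θ ≤ ∑ b, w (c i) b * (if d b = i then 1 else 0)) ∧
      ∀ b, d b < m → γ * q b ≤ w (c (d b)) b := by
  have hne := hp.nonempty
  intro m
  induction m with
  | zero => exact fun _ => ⟨fun _ => Classical.arbitrary X, fun _ => 0, by simp, by simp⟩
  | succ m ih =>
    intro hm
    obtain ⟨c, d, hc, hd⟩ := ih (Nat.le_of_succ_le hm)
    have hU : ∑ b, q b * (if d b < m then 1 else 0) ≤ m / γ := by
      calc ∑ b, q b * (if d b < m then 1 else 0)
          ≤ ∑ b, ∑ i ∈ Finset.range m, w (c i) b / γ := by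
            refine Finset.sum_le_sum fun b _ => ?_
            have hnn : ∀ i ∈ Finset.range m, 0 ≤ w (c i) b / γ :=
              fun i _ => div_nonneg ((hw _).1 b) hγ.le
            split_ifs with hb
            · refine le_trans ?_ (Finset.single_le_sum hnn (Finset.mem_range.2 hb))
              rw [le_div_iff₀ hγ, mul_one, mul_comm]
              exact hd b hb
            · rw [mul_zero]
              exact Finset.sum_nonneg hnn
        _ = m / γ := by
            rw [Finset.sum_comm]
            simp only [← Finset.sum_div, (hw _).2, Finset.sum_const, Finset.card_range,
              nsmul_eq_mul, mul_one]
    obtain ⟨a, ha⟩ : ∃ a, 1 - θ ≤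
        ∑ b, w a b * (if m ≤ d b ∧ γ * q b < w a b then 1 else 0) := by
      by_contra! hcon
      have h1 : ∑ a, p a * ∑ b, w a b * (if m ≤ d b ∧ γ * q b < w a b then 1 else 0) ≤
          ∑ a, p a * (1 - θ) :=
        Finset.sum_le_sum fun a _ => mul_le_mul_of_nonneg_left (hcon a).le (hp.1 a)
      rw [← Finset.sum_mul, hp.2, one_mul] at h1
      have h2 : ∀ a, 1 - ∑ b, w a b * (if d b < m then 1 else 0)
          - ∑ b, w a b * (if w a b ≤ γ * q b then 1 else 0) ≤
          ∑ b, w a b * (if m ≤ d b ∧ γ * q b < w a b then 1 else 0) := by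
        intro a
        refine le_of_eq_of_le (congrArg (fun t => t - _ - _) (hw a).2.symm) ?_
        rw [← Finset.sum_sub_distrib, ← Finset.sum_sub_distrib]
        refine Finset.sum_le_sum fun b _ => ?_
        have hwb := (hw a).1 b
        by_cases h3 : d b < m <;> by_cases h4 : w a b ≤ γ * q b
        · simp [h3, h4, hwb, h3.not_ge]
        · simp [h3, h4, h3.not_ge]
        · simp [h3, h4, not_lt.2 h4]
        · simp [h3, h4, not_le.1 h4, not_lt.1 h3]
      have h3 := Finset.sum_le_sum fun a (_ : a ∈ Finset.univ) =>
        mul_le_mul_of_nonneg_left (h2 a) (hp.1 a)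
      have h4 : ∑ a, p a * ∑ b, w a b * (if d b < m then 1 else 0) =
          ∑ b, q b * (if d b < m then 1 else 0) := by
        simp only [Finset.mul_sum, ← hq, outDist, Finset.sum_mul, mul_assoc]
        rw [Finset.sum_comm]
      simp only [mul_sub, Finset.sum_sub_distrib, mul_one, hp.2, h4] at h3
      have h5 : (m : ℝ) / γ ≤ M / γ := by
        gcongr
        exact Nat.le_of_succ_le hm
      linarith
    refine ⟨Function.update c m a,
      fun b => if d b < m then d b else if γ * q b < w a b then m else m + 1, ?_, ?_⟩
    · intro i hi
      rcases Nat.lt_succ_iff_lt_or_eq.1 hi with hi | rfl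
      · rw [Function.update_of_ne hi.ne]
        refine (hc i hi).trans (le_of_eq (Finset.sum_congr rfl fun b _ => ?_))
        congr 1
        have : (d b = i) ↔
            (if d b < m then d b else if γ * q b < w a b then m else m + 1) = i := by
          split_ifs <;> omega
        simp only [this]
      · rw [Function.update_self]
        refine ha.trans (le_of_eq (Finset.sum_congr rfl fun b _ => ?_))
        congr 1
        have : (i ≤ d b ∧ γ * q b < w a b) ↔
            (if d b < i then d b else if γ * q b < w a b then i else i + 1) = i := by
          split_ifs <;> simp_all
          omega
        simp only [this]
    · intro b hb
      dsimp only at hb ⊢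
      by_cases h1 : d b < m
      · rw [if_pos h1, Function.update_of_ne h1.ne]
        exact hd b h1
      · by_cases h2 : γ * q b < w a b
        · rw [if_neg h1, if_pos h2, Function.update_self]
          exact h2.le
        · rw [if_neg h1, if_neg h2] at hb
          omega

omit [Fintype X] in
lemma errProb_nonneg {W : X → Y → ℝ} (hW : IsChannel W) (n M : ℕ) (enc : Fin M → List Y → X)
    (dec : (Fin n → Y) → Fin M) : 0 ≤ errProb W n M enc dec := by
  refine mul_nonneg (by positivity) (Finset.sum_nonneg fun m _ => Finset.sum_nonneg fun y _ =>
    mul_nonneg (Finset.prod_nonneg fun _ _ => (hW _).1 _) ?_)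
  split_ifs <;> norm_num

omit [Fintype X] in
lemma exists_code_of_codewords [Nonempty X] {W : X → Y → ℝ} (hW : IsChannel W) {n M : ℕ}
    (hM : 0 < M) {θ : ℝ} (c : ℕ → Fin n → X) (d : (Fin n → Y) → ℕ)
    (hc : ∀ i < M, 1 - θ ≤ ∑ y, (∏ k, W (c i k) (y k)) * (if d y = i then 1 else 0)) :
    ∃ enc dec, errProb W n M enc dec ≤ θ := by
  refine ⟨fun m l => if h : l.length < n then c m ⟨l.length, h⟩ else Classical.arbitrary X,
    fun y => if h : d y < M then ⟨d y, h⟩ else ⟨0, hM⟩, ?_⟩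
  have hM0 : (0 : ℝ) < M := Nat.cast_pos.2 hM
  rw [errProb, inv_mul_le_iff₀ hM0]
  have hm : ∀ m : Fin M, ∑ y : Fin n → Y, (∏ k : Fin n, W
      (if h : ((List.ofFn y).take (k : ℕ)).length < n then
        c m ⟨((List.ofFn y).take (k : ℕ)).length, h⟩ else Classical.arbitrary X) (y k)) *
      (if (if h : d y < M then (⟨d y, h⟩ : Fin M) else ⟨0, hM⟩) = m then 0 else 1) ≤ θ := by
    intro m
    have h1 : ∑ y : Fin n → Y, ∏ k, W (c m k) (y k) = 1 := by
      rw [← Fintype.piFinset_univ, ← Finset.prod_univ_sum]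
      simp [(hW _).2]
    have h2 : ∀ y : Fin n → Y, (∏ k : Fin n, W
        (if h : ((List.ofFn y).take (k : ℕ)).length < n then
          c m ⟨((List.ofFn y).take (k : ℕ)).length, h⟩ else Classical.arbitrary X) (y k)) =
        ∏ k, W (c m k) (y k) := by
      intro y
      refine Finset.prod_congr rfl fun k _ => ?_
      have hk : ((List.ofFn y).take (k : ℕ)).length = k := by
        simp
      rw [dif_pos (by rw [hk]; exact k.2)]
      congr 2
      exact Fin.ext hk
    have h3 : ∑ y : Fin n → Y, (∏ k, W (c m k) (y k)) *
        (if (if h : d y < M then (⟨d y, h⟩ : Fin M) else ⟨0, hM⟩) = m then 0 else 1) ≤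
        ∑ y : Fin n → Y, (∏ k, W (c m k) (y k)) * (1 - (if d y = m then 1 else 0)) := by
      refine Finset.sum_le_sum fun y _ => mul_le_mul_of_nonneg_left ?_
        (Finset.prod_nonneg fun _ _ => (hW _).1 _)
      by_cases h : d y = m
      · simp [h]
      · rw [if_neg h]
        split_ifs <;> norm_num
    simp only [h2]
    refine h3.trans ?_
    simp only [mul_sub, Finset.sum_sub_distrib, mul_one, h1]
    linarith [hc m m.2]
  calc _ ≤ ∑ _m : Fin M, θ := Finset.sum_le_sum fun m _ => hm m
    _ = M * θ := by simp

lemma sum_prod_sq_sum_le {p : Y → ℝ} {ξ : Y → ℝ} (hp : IsDist p) (h0 : ∑ y, p y * ξ y = 0)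
    (n : ℕ) :
    ∑ y : Fin n → Y, (∏ k, p (y k)) * (∑ k, ξ (y k)) ^ 2 ≤ n * ∑ y, p y * ξ y ^ 2 := by
  have := feedbackExp_pathSum_le (W := fun (_ : Unit) => p) (fun _ => hp) (fun _ => ξ)
    (fun _ => ()) (fun _ s => s ^ 2) (∑ y, p y * ξ y ^ 2) n (fun k _ _ s => le_of_eq (by
      have e : ∀ y, p y * (s + ξ y) ^ 2 = s ^ 2 * p y + 2 * s * (p y * ξ y) + p y * ξ y ^ 2 :=
        fun y => by ring
      simp only [e, Finset.sum_add_distrib, ← Finset.mul_sum, hp.2, h0]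
      ring))
  simpa [feedbackExp, pathSum] using this

omit [Fintype Y] in
lemma outDist_prod {P : X → ℝ} {W : X → Y → ℝ} {n : ℕ} (y : Fin n → Y) :
    outDist (fun a : Fin n → X => ∏ k, P (a k)) (fun a y => ∏ k, W (a k) (y k)) y =
      ∏ k, outDist P W (y k) := by
  unfold outDist
  rw [Finset.prod_univ_sum, Fintype.piFinset_univ]
  simp only [Finset.prod_mul_distrib]

lemma isDist_prod {p : Y → ℝ} (hp : IsDist p) (n : ℕ) :
    IsDist (fun y : Fin n → Y => ∏ k, p (y k)) :=
  ⟨fun _ => Finset.prod_nonneg fun _ _ => hp.1 _, sum_prod_eq_one hp.2 n⟩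

omit [Fintype X] in
lemma isChannel_prod {W : X → Y → ℝ} (hW : IsChannel W) (n : ℕ) :
    IsChannel (fun (a : Fin n → X) (y : Fin n → Y) => ∏ k, W (a k) (y k)) := by
  refine fun a => ⟨fun _ => Finset.prod_nonneg fun _ _ => (hW _).1 _, ?_⟩
  rw [← Fintype.piFinset_univ, ← Finset.prod_univ_sum]
  simp [(hW _).2]

/-- Chebyshev bound on the lower tail of the information density of an i.i.d. input. -/
lemma information_tail_le {P : X → ℝ} {W : X → Y → ℝ} {q : Y → ℝ} {C v : ℝ} (hP : IsDist P)
    (hWc : IsChannel W) (hW : ∀ x y, 0 < W x y) (hq : ∀ y, 0 < q y)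
    (hmean : ∑ x, P x * ∑ y, W x y * (Real.log (W x y / q y) - C) = 0)
    (hvar : ∑ x, P x * ∑ y, W x y * (Real.log (W x y / q y) - C) ^ 2 = v)
    {n : ℕ} {r : ℝ} (hr : 0 < r) :
    ∑ a : Fin n → X, (∏ k, P (a k)) * ∑ b : Fin n → Y, (∏ k, W (a k) (b k)) *
      (if ∏ k, W (a k) (b k) ≤ Real.exp (n * C - r) * ∏ k, q (b k) then 1 else 0) ≤
      n * v / r ^ 2 := by
  set p : X × Y → ℝ := fun z => P z.1 * W z.1 z.2 with hp
  set ξ : X × Y → ℝ := fun z => Real.log (W z.1 z.2 / q z.2) - C with hξ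
  have hpd : IsDist p := by
    refine ⟨fun z => mul_nonneg (hP.1 _) (hW _ _).le, ?_⟩
    simp only [hp, Fintype.sum_prod_type, ← Finset.mul_sum, (hWc _).2, mul_one, hP.2]
  have h0 : ∑ z, p z * ξ z = 0 := by
    rw [← hmean, Fintype.sum_prod_type]
    simp only [hp, hξ, Finset.mul_sum, mul_assoc]
  have hv : ∑ z, p z * ξ z ^ 2 = v := by
    rw [← hvar, Fintype.sum_prod_type]
    simp only [hp, hξ, Finset.mul_sum, mul_assoc]
  have hmain := sum_prod_sq_sum_le hpd h0 n
  rw [hv] at hmain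
  rw [le_div_iff₀ (by positivity)]
  refine le_trans ?_ hmain
  rw [← (Equiv.arrowProdEquivProdArrow (Fin n) (fun _ => X) (fun _ => Y)).symm.sum_comp,
    Fintype.sum_prod_type, Finset.sum_mul]
  refine Finset.sum_le_sum fun a _ => ?_
  rw [Finset.mul_sum, Finset.sum_mul]
  refine Finset.sum_le_sum fun b _ => ?_
  simp only [Equiv.arrowProdEquivProdArrow, Equiv.coe_fn_symm_mk, hp, hξ,
    Finset.prod_mul_distrib]
  rw [← mul_assoc, mul_assoc _ _ (r ^ 2)]
  refine mul_le_mul_of_nonneg_left ?_ (mul_nonneg (Finset.prod_nonneg fun _ _ => hP.1 _)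
    (Finset.prod_nonneg fun _ _ => (hW _ _).le))
  split_ifs with h
  · have hqn : 0 < ∏ k, q (b k) := Finset.prod_pos fun _ _ => hq _
    have hwn : 0 < ∏ k, W (a k) (b k) := Finset.prod_pos fun _ _ => hW _ _
    have hsum : ∑ k, (Real.log (W (a k) (b k) / q (b k)) - C) =
        Real.log ((∏ k, W (a k) (b k)) / ∏ k, q (b k)) - n * C := by
      rw [Finset.sum_sub_distrib, ← Finset.prod_div_distrib,
        Real.log_prod (fun k _ => (div_pos (hW _ _) (hq _)).ne')]
      simp
    have hlog : Real.log ((∏ k, W (a k) (b k)) / ∏ k, q (b k)) ≤ n * C - r := by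
      rw [Real.log_le_iff_le_exp (div_pos hwn hqn), div_le_iff₀ hqn]
      exact h
    rw [hsum, one_mul]
    nlinarith
  · rw [zero_mul]
    positivity

lemma achievability {ε : ℝ} (hε : 0 < ε) : ∃ K : ℝ, 0 < K ∧
    ∀ (W : X → Y → ℝ) (P : X → ℝ) (q : Y → ℝ) (C V v : ℝ), IsDist P → IsChannel W →
      (∀ x y, 0 < W x y) → (∀ y, outDist P W y = q y) → 0 < C → 0 < V → v ≤ 3 * V →
      ∑ x, P x * ∑ y, W x y * (Real.log (W x y / q y) - C) = 0 →
      ∑ x, P x * ∑ y, W x y * (Real.log (W x y / q y) - C) ^ 2 = v →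
      ∀ᶠ n : ℕ in atTop, ∃ R : ℝ, n * R = n * C - K * Real.sqrt (n * V) ∧ minErr W n R ≤ ε := by
  set K := Real.sqrt (6 / ε) with hK
  have hK0 : 0 < K := Real.sqrt_pos.2 (by positivity)
  have hK2 : K ^ 2 = 6 / ε := Real.sq_sqrt (by positivity)
  refine ⟨K + 1, by positivity, fun W P q C V v hP hWc hW hPq hC hV hv hmean hvar => ?_⟩
  have hne := hP.nonempty
  have hq : ∀ y, 0 < q y := fun y => hPq y ▸ outDist_pos hP hW y
  have hr := tendsto_sqrt_mul_atTop hV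
  have h1 : Tendsto (fun n : ℕ => Real.exp (-Real.sqrt (n * V))) atTop (nhds 0) :=
    Real.tendsto_exp_neg_atTop_nhds_zero.comp hr
  have h2 : Tendsto (fun n : ℕ => Real.exp (-(Real.sqrt (n * V) * (Real.sqrt (n * V) * (C / V)
      + -K)))) atTop (nhds 0) :=
    Real.tendsto_exp_neg_atTop_nhds_zero.comp (hr.atTop_mul_atTop₀
      (tendsto_atTop_add_const_right _ _ (hr.atTop_mul_const (div_pos hC hV))))
  have h3 := h1.add h2
  rw [add_zero] at h3
  filter_upwards [h3.eventually_lt_const (show 0 < ε / 2 by positivity), eventually_gt_atTop 0]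
    with n hn hn0
  have hnR : (0 : ℝ) < n := Nat.cast_pos.2 hn0
  have hr0 : 0 < Real.sqrt (n * V) := Real.sqrt_pos.2 (by positivity)
  have hr2 : Real.sqrt (n * V) ^ 2 = n * V := Real.sq_sqrt (by positivity)
  generalize Real.sqrt (n * V) = r at *
  have hR : (n : ℝ) * ((n * C - (K + 1) * r) / n) = n * C - (K + 1) * r := by field_simp
  refine ⟨(n * C - (K + 1) * r) / n, hR, ?_⟩
  unfold minErr
  rw [hR]
  set M := ⌈Real.exp (n * C - (K + 1) * r)⌉₊ with hM
  have hM0 : 0 < M := Nat.ceil_pos.2 (Real.exp_pos _)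
  have hM1 : (M : ℝ) < Real.exp (n * C - (K + 1) * r) + 1 := Nat.ceil_lt_add_one (Real.exp_pos _).le
  have htail := information_tail_le (n := n) hP hWc hW hq hmean hvar (mul_pos hK0 hr0)
  have htail2 : n * v / (K * r) ^ 2 ≤ ε / 2 := by
    rw [mul_pow, hK2, hr2, div_le_iff₀ (by positivity)]
    have : ε / 2 * (6 / ε * (n * V)) = n * (3 * V) := by field_simp; norm_num
    rw [this]
    gcongr
  have hMγ : M / Real.exp (n * C - K * r) < ε / 2 := by
    refine lt_of_le_of_lt ?_ hn
    rw [div_le_iff₀ (Real.exp_pos _), add_mul, ← Real.exp_add, ← Real.exp_add]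
    have e1 : -r + (n * C - K * r) = n * C - (K + 1) * r := by ring
    have e2 : -(r * (r * (C / V) + -K)) + (n * C - K * r) = 0 := by
      have : r * (r * (C / V)) = n * C := by
        rw [← mul_assoc, ← sq, hr2]; field_simp
      rw [mul_add, this]; ring
    rw [e1, e2, Real.exp_zero]
    exact hM1.le
  obtain ⟨c, d, hc, -⟩ := feinstein (isDist_prod hP n) (isChannel_prod hWc n)
    (q := fun b => ∏ k, q (b k)) (fun b => by simp only [outDist_prod, hPq])
    (Real.exp_pos (n * C - K * r)) (M := M) (θ := ε) (by linarith) M le_rfl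
  obtain ⟨enc, dec, he⟩ := exists_code_of_codewords hWc hM0 c d hc
  have hbdd : BddBelow {e | ∃ enc dec, e = errProb W n M enc dec} :=
    ⟨0, by rintro _ ⟨enc, dec, rfl⟩; exact errProb_nonneg hWc _ _ _ _⟩
  exact (csInf_le hbdd ⟨enc, dec, rfl⟩).trans he

/-- Two-sided second-order bounds on the feedback code size for channels whose information density
is small. -/
lemma eventually_secondOrder_bounds {ε : ℝ} (hε0 : 0 < ε) (hε1 : ε < 1) :
    ∃ K : ℝ, ∀ η : ℝ, 0 < η → ∃ κ : ℝ, 0 < κ ∧ κ ≤ 1 / 9 ∧ ∀ (W : X → Y → ℝ) (V : ℝ),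
      Nonempty X → IsChannel W → (∀ x y, 0 < W x y) → 0 < capacity W →
      (∀ x y, |Real.log (W x y / qStar W y)| ≤ κ) →
      |V - 2 * capacity W| ≤ 9 * κ * capacity W →
      ∀ᶠ n : ℕ in atTop,
        -K ≤ (Real.log (Mfb W n ε) - n * capacity W) / Real.sqrt (n * V) ∧
        (Real.log (Mfb W n ε) - n * capacity W) / Real.sqrt (n * V) ≤ gcdfInv ε + η := by
  obtain ⟨K, hK, hach⟩ := achievability (X := X) (Y := Y) hε0
  refine ⟨K, fun η hη => ?_⟩
  obtain ⟨δ, hδ, hconv⟩ := converse (X := X) (Y := Y) (gcdf_gcdfInv hε0 hε1) hη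
  refine ⟨min (1 / 9) (δ / 18), by positivity, min_le_left _ _,
    fun W V hX hWc hW hC hκ hVC => ?_⟩
  set κ := min (1 / 9) (δ / 18) with hκdef
  have hκ1 : κ ≤ 1 / 9 := min_le_left _ _
  have hκ2 : κ ≤ δ / 18 := min_le_right _ _
  have hκC : 9 * κ * capacity W ≤ capacity W := by nlinarith
  have hVC' : capacity W ≤ V := by linarith [(abs_le.1 hVC).1]
  have hV : 0 < V := hC.trans_le hVC'
  have hcase : ∀ x, (∑ y, W x y * Real.log (W x y / qStar W y) = capacity W ∧
      |∑ y, W x y * (Real.log (W x y / qStar W y) - capacity W) ^ 2 - V| ≤ δ * V) ∨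
      ∑ y, W x y * Real.log (W x y / qStar W y) < capacity W := by
    intro x
    rcases (klSum_qStar_le_capacity hWc hW x).eq_or_lt with h | h
    · refine Or.inl ⟨h, ?_⟩
      rw [sum_sq_sub_eq_nu hWc h]
      have h1 := abs_nu_sub_le hWc hW hκ hκ1 h
      have h2 : δ * capacity W ≤ δ * V := by gcongr
      have h3 : 18 * κ * capacity W ≤ δ * capacity W := by gcongr; linarith
      calc |nu W x - V| = |(nu W x - 2 * capacity W) - (V - 2 * capacity W)| := by ring_nf
        _ ≤ _ := abs_sub _ _
        _ ≤ δ * V := by linarith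
    · exact Or.inr h
  obtain ⟨P, hPa, hPq⟩ := exists_outDist_eq_qStar hW
  have hmean : ∑ x, P x * ∑ y, W x y * (Real.log (W x y / qStar W y) - capacity W) = 0 := by
    refine Finset.sum_eq_zero fun x _ => ?_
    by_cases hx : P x = 0
    · rw [hx, zero_mul]
    · have := klSum_qStar_eq_capacity hWc hW hPa hx
      unfold klSum at this
      simp only [mul_sub, Finset.sum_sub_distrib, ← Finset.sum_mul, (hWc x).2, this]
      simp
  have hvar : ∑ x, P x * ∑ y, W x y * (Real.log (W x y / qStar W y) - capacity W) ^ 2 =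
      ∑ x, P x * nu W x := by
    refine Finset.sum_congr rfl fun x _ => ?_
    by_cases hx : P x = 0
    · rw [hx, zero_mul, zero_mul]
    · rw [sum_sq_sub_eq_nu hWc (klSum_qStar_eq_capacity hWc hW hPa hx)]
  have hv : ∑ x, P x * nu W x ≤ 3 * V := by
    have := (abs_le.1 (abs_sum_nu_sub_le hWc hW hκ hκ1 hPa)).2
    linarith
  filter_upwards [hconv W (qStar W) (capacity W) V hWc hW (qStar_pos hW) (sum_qStar hWc hW) hV
      hcase, hach W P (qStar W) (capacity W) V _ hPa.1 hWc hW (fun y => by rw [hPq]) hC hV hv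
      hmean hvar, eventually_gt_atTop 0] with n hcn han hn
  have hnR : (0 : ℝ) < n := Nat.cast_pos.2 hn
  have hr0 : 0 < Real.sqrt (n * V) := Real.sqrt_pos.2 (by positivity)
  generalize Real.sqrt (n * V) = r at *
  obtain ⟨R, hR, hRε⟩ := han
  have hup : ∀ m ∈ {m : ℝ | ∃ R : ℝ, m = (⌈Real.exp (n * R)⌉₊ : ℝ) ∧ minErr W n R ≤ ε},
      m ≤ Real.exp (n * capacity W + (gcdfInv ε + η) * r) := by
    rintro _ ⟨R, rfl, hR⟩
    have hM : 0 < ⌈Real.exp (n * R)⌉₊ := Nat.ceil_pos.2 (Real.exp_pos _)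
    have hne : {e | ∃ enc dec, e = errProb W n ⌈Real.exp (n * R)⌉₊ enc dec}.Nonempty :=
      ⟨_, fun _ _ => Classical.arbitrary X, fun _ => ⟨0, hM⟩, rfl⟩
    obtain ⟨_, ⟨enc, dec, rfl⟩, hlt⟩ :=
      exists_lt_of_csInf_lt hne (lt_of_le_of_lt hR (show ε < ε + δ by linarith))
    exact hcn _ hM enc dec hlt
  have hmem : (⌈Real.exp (n * R)⌉₊ : ℝ) ∈
      {m : ℝ | ∃ R : ℝ, m = (⌈Real.exp (n * R)⌉₊ : ℝ) ∧ minErr W n R ≤ ε} := ⟨R, rfl, hRε⟩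
  have hlow : Real.exp (n * R) ≤ Mfb W n ε := (Nat.le_ceil _).trans (le_csSup ⟨_, hup⟩ hmem)
  have hup' : Mfb W n ε ≤ Real.exp (n * capacity W + (gcdfInv ε + η) * r) :=
    csSup_le ⟨_, hmem⟩ hup
  have hpos : 0 < Mfb W n ε := (Real.exp_pos _).trans_le hlow
  rw [← Real.le_log_iff_exp_le hpos, hR] at hlow
  rw [← Real.log_le_iff_le_exp hpos] at hup'
  rw [le_div_iff₀ hr0, div_le_iff₀ hr0]
  constructor <;> linarith

lemma abs_log_le_two_mul {a u : ℝ} (ha : |a - 1| ≤ u) (hu : u ≤ 1 / 2) :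
    |Real.log a| ≤ 2 * u := by
  obtain ⟨h1, h2⟩ := abs_le.1 ha
  have ha0 : 0 < a := by linarith
  have h3 := Real.log_le_sub_one_of_pos ha0
  have h4 := Real.one_sub_inv_le_log_of_pos ha0
  have h5 : -(2 * u) ≤ 1 - a⁻¹ := by
    have : 1 - a⁻¹ = (a - 1) / a := by field_simp
    rw [this, le_div_iff₀ ha0]
    nlinarith
  rw [abs_le]
  constructor <;> linarith

omit [Fintype X] in
lemma isChannel_VNC {Γ : Y → ℝ} {lam : X → Y → ℝ} {ζ : ℝ} (hΓ : IsDist Γ)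
    (hlam : ∀ x, ∑ y, Γ y * lam x y = 0) (hpos : ∀ x y, 0 < VNC Γ lam ζ x y) :
    IsChannel (VNC Γ lam ζ) := by
  refine fun x => ⟨fun y => (hpos x y).le, ?_⟩
  have e : ∀ y, VNC Γ lam ζ x y = Γ y + ζ * (Γ y * lam x y) := fun y => by rw [VNC]; ring
  simp only [e, Finset.sum_add_distrib, ← Finset.mul_sum, hΓ.2, hlam, mul_zero, add_zero]

lemma eventually_VNC {Γ : Y → ℝ} (hΓ : IsDist Γ) (hΓpos : ∀ y, 0 < Γ y) {lam : X → Y → ℝ}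
    (hlam : ∀ x, ∑ y, Γ y * lam x y = 0) (hC : 0 < bigC Γ lam) {κ : ℝ} (hκ : 0 < κ) :
    ∀ᶠ ζ : ℝ in nhdsWithin 0 (Ioi 0), Nonempty X ∧ IsChannel (VNC Γ lam ζ) ∧
      (∀ x y, 0 < VNC Γ lam ζ x y) ∧ 0 < capacity (VNC Γ lam ζ) ∧
      ∀ x y, |Real.log (VNC Γ lam ζ x y / qStar (VNC Γ lam ζ) y)| ≤ κ := by
  obtain ⟨P, hP, hPpos⟩ : ∃ P : X → ℝ, IsDist P ∧ 0 < 1 / 2 * ∑ y, Γ y *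
      ((∑ x, P x * lam x y ^ 2) - (∑ x, P x * lam x y) ^ 2) := by
    by_contra! hcon
    refine absurd hC (not_lt.2 (Real.sSup_nonpos ?_))
    rintro _ ⟨P, hP, rfl⟩
    exact hcon P hP
  have hX := hP.nonempty
  obtain ⟨x₀, y₀, hx₀, hne⟩ : ∃ x₀ y₀, 0 < P x₀ ∧ lam x₀ y₀ ≠ ∑ x, P x * lam x y₀ := by
    by_contra! hcon
    refine hPpos.ne' ?_
    rw [Finset.sum_eq_zero, mul_zero]
    intro y _
    set μ := ∑ x, P x * lam x y with hμ
    have h1 : ∀ x, P x * lam x y ^ 2 = P x * μ ^ 2 := by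
      intro x
      rcases (hP.1 x).eq_or_lt with h | h
      · rw [← h, zero_mul, zero_mul]
      · rw [hcon x y h]
    simp only [h1, ← Finset.sum_mul, hP.2]
    ring
  set B := ∑ x, ∑ y, |lam x y| with hB
  have hBle : ∀ x y, |lam x y| ≤ B := fun x y =>
    (Finset.single_le_sum (f := fun y => |lam x y|) (fun _ _ => abs_nonneg _)
      (Finset.mem_univ y)).trans
    (Finset.single_le_sum (f := fun x => ∑ y, |lam x y|)
      (fun _ _ => Finset.sum_nonneg fun _ _ => abs_nonneg _) (Finset.mem_univ x))
  have hlim : Tendsto (fun ζ : ℝ => ζ * B) (nhdsWithin 0 (Ioi 0)) (nhds 0) := by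
    have : Tendsto (fun t : ℝ => t * B) (nhds 0) (nhds (0 * B)) :=
      (continuous_id.mul continuous_const).tendsto 0
    rw [zero_mul] at this
    exact this.mono_left nhdsWithin_le_nhds
  filter_upwards [hlim.eventually_lt_const (show (0 : ℝ) < 1 / 2 by norm_num),
    hlim.eventually_lt_const (show 0 < κ / 4 by positivity), self_mem_nhdsWithin] with ζ h1 h2 hζ
  rw [mem_Ioi] at hζ
  set W := VNC Γ lam ζ with hWdef
  have habs : ∀ x y, |ζ * lam x y| ≤ ζ * B := fun x y => by
    rw [abs_mul, abs_of_pos hζ]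
    exact mul_le_mul_of_nonneg_left (hBle x y) hζ.le
  have hW : ∀ x y, 0 < W x y := fun x y =>
    mul_pos (hΓpos y) (by linarith [(abs_le.1 (habs x y)).1])
  have hWc : IsChannel W := isChannel_VNC hΓ hlam hW
  have hout : ∀ Q : X → ℝ, IsDist Q → ∀ y,
      outDist Q W y = Γ y * (1 + ζ * ∑ x, Q x * lam x y) := by
    intro Q hQ y
    have e : ∀ x, Q x * W x y = Γ y * Q x + Γ y * ζ * (Q x * lam x y) := fun x => by
      rw [hWdef, VNC]; ring
    simp only [outDist, e, Finset.sum_add_distrib, ← Finset.mul_sum, hQ.2]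
    ring
  refine ⟨hX, hWc, hW, ?_, ?_⟩
  · refine capacity_pos hWc hW hP hx₀ fun h => hne ?_
    have h3 := congrFun h y₀
    rw [hout P hP, hWdef, VNC] at h3
    have h4 := mul_left_cancel₀ (hΓpos y₀).ne' h3
    exact mul_left_cancel₀ hζ.ne' (add_left_cancel h4)
  · intro x y
    obtain ⟨Q, ⟨hQ, -⟩, hQq⟩ := exists_outDist_eq_qStar hW
    have hmean : |ζ * ∑ x, Q x * lam x y| ≤ ζ * B := by
      rw [abs_mul, abs_of_pos hζ]
      refine mul_le_mul_of_nonneg_left ?_ hζ.le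
      calc |∑ x, Q x * lam x y| ≤ ∑ x, |Q x * lam x y| := Finset.abs_sum_le_sum_abs _ _
        _ ≤ ∑ x, Q x * B := by
            refine Finset.sum_le_sum fun x _ => ?_
            rw [abs_mul, abs_of_nonneg (hQ.1 x)]
            exact mul_le_mul_of_nonneg_left (hBle x y) (hQ.1 x)
        _ = B := by rw [← Finset.sum_mul, hQ.2, one_mul]
    have hx := habs x y
    have e1 := abs_log_le_two_mul (a := 1 + ζ * lam x y) (by rwa [add_sub_cancel_left]) h1.le
    have e2 := abs_log_le_two_mul (a := 1 + ζ * ∑ x, Q x * lam x y)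
      (by rwa [add_sub_cancel_left]) h1.le
    have p1 : 0 < 1 + ζ * lam x y := by linarith [(abs_le.1 hx).1]
    have p2 : 0 < 1 + ζ * ∑ x, Q x * lam x y := by linarith [(abs_le.1 hmean).1]
    rw [← hQq, hout Q hQ, hWdef, VNC, mul_div_mul_left _ _ (hΓpos y).ne',
      Real.log_div p1.ne' p2.ne']
    refine (abs_sub _ _).trans ?_
    linarith

lemma limsup_limsup_le {u : ℝ → ℕ → ℝ} {l : Filter ℝ} [l.NeBot] {t K : ℝ}
    (h : ∀ η : ℝ, 0 < η → ∀ᶠ ζ in l, ∀ᶠ n in atTop, -K ≤ u ζ n ∧ u ζ n ≤ t + η) :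
    Filter.limsup (fun ζ => Filter.limsup (u ζ) atTop) l ≤ t := by
  have hle : ∀ η : ℝ, 0 < η → ∀ᶠ ζ in l,
      -K ≤ Filter.limsup (u ζ) atTop ∧ Filter.limsup (u ζ) atTop ≤ t + η := by
    intro η hη
    filter_upwards [h η hη] with ζ hζ
    have h1 : ∀ᶠ n in atTop, -K ≤ u ζ n := hζ.mono fun n hn => hn.1
    have h2 : ∀ᶠ n in atTop, u ζ n ≤ t + η := hζ.mono fun n hn => hn.2
    exact ⟨Filter.le_limsup_of_frequently_le h1.frequently ⟨_, h2⟩,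
      Filter.limsup_le_of_le (Filter.IsBoundedUnder.isCoboundedUnder_le ⟨-K, h1⟩) h2⟩
  refine le_of_forall_pos_le_add fun η hη => ?_
  exact Filter.limsup_le_of_le (Filter.IsBoundedUnder.isCoboundedUnder_le
    ⟨-K, (hle η hη).mono fun ζ hζ => hζ.1⟩) ((hle η hη).mono fun ζ hζ => hζ.2)

/-- Theorem 5 (Feedback does not improve the second-order coding rate in the
very noisy limit). -/
theorem vnc_feedback_no_improvement
    {X Y : Type*} [Fintype X] [Fintype Y]
    (Γ : Y → ℝ) (hΓ : IsDist Γ) (hΓpos : ∀ y, 0 < Γ y)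
    (lam : X → Y → ℝ) (hlam : ∀ x, ∑ y, Γ y * lam x y = 0)
    (hC : 0 < bigC Γ lam) :
    (∀ᶠ ζ : ℝ in nhdsWithin 0 (Set.Ioi 0), 0 < capacity (VNC Γ lam ζ)) ∧
    (∀ ε : ℝ, 0 < ε → ε ≤ 1 / 2 →
      Filter.limsup (fun ζ : ℝ =>
          Filter.limsup (fun n : ℕ =>
            (Real.log (Mfb (VNC Γ lam ζ) n ε) - n * capacity (VNC Γ lam ζ)) /
              Real.sqrt (n * Vmin (VNC Γ lam ζ))) Filter.atTop)
        (nhdsWithin 0 (Set.Ioi 0)) ≤ gcdfInv ε) ∧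
    (∀ ε : ℝ, 1 / 2 < ε → ε < 1 →
      Filter.limsup (fun ζ : ℝ =>
          Filter.limsup (fun n : ℕ =>
            (Real.log (Mfb (VNC Γ lam ζ) n ε) - n * capacity (VNC Γ lam ζ)) /
              Real.sqrt (n * Vmax (VNC Γ lam ζ))) Filter.atTop)
        (nhdsWithin 0 (Set.Ioi 0)) ≤ gcdfInv ε) := by
  refine ⟨(eventually_VNC hΓ hΓpos hlam hC one_pos).mono fun ζ h => h.2.2.2.1,
    fun ε h0 h1 => ?_, fun ε h0 h1 => ?_⟩
  · obtain ⟨K, hK⟩ := eventually_secondOrder_bounds (X := X) (Y := Y) h0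
      (show ε < 1 by linarith)
    refine limsup_limsup_le (K := K) fun η hη => ?_
    obtain ⟨κ, hκ, hκ1, hb⟩ := hK η hη
    filter_upwards [eventually_VNC hΓ hΓpos hlam hC hκ] with ζ ⟨hX, hWc, hW, hCap, hsmall⟩
    exact hb _ _ hX hWc hW hCap hsmall (abs_Vmin_sub_le hWc hW hsmall hκ1)
  · obtain ⟨K, hK⟩ := eventually_secondOrder_bounds (X := X) (Y := Y)
      (show 0 < ε by linarith) h1
    refine limsup_limsup_le (K := K) fun η hη => ?_
    obtain ⟨κ, hκ, hκ1, hb⟩ := hK η hη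
    filter_upwards [eventually_VNC hΓ hΓpos hlam hC hκ] with ζ ⟨hX, hWc, hW, hCap, hsmall⟩
    exact hb _ _ hX hWc hW hCap hsmall (abs_Vmax_sub_le hWc hW hsmall hκ1)

end Paper
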